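/- arXiv:0706.3669 — 4 statements merged into one kernel-verified Lean document; each statement's English description precedes it below -/
import Mathlib

section
/- Let n ≥ 2 be an integer, λ ∈ ℝ, and l(λ) = √(max(((n−1)/2)² − λ, 0)). Suppose l ∈ ℝ satisfies either (l < min(1/2, l(λ)) and l ≠ −l(λ)) or l > max(1/2, l(λ)). Then there exists C > 0 such that for every smooth compactly supported v : (0,∞) × ℝ^{n−1} → ℂ, ∫∫ x^{−2l−n} (|v|² + |x ∂ₓ v|² + x² |∇_y v|²) dx dy ≤ C ∫∫ x^{−2l−n} |P v|² dx dy. -/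
open MeasureTheory

/-- `∂ₓ` on functions of `(x, y) ∈ ℝ × ℝ^m`. -/
noncomputable def pderivX {m : ℕ} (v : ℝ × (Fin m → ℝ) → ℂ) (p : ℝ × (Fin m → ℝ)) : ℂ :=
  fderiv ℝ v p (1, 0)

/-- `∂_{yⱼ}` on functions of `(x, y) ∈ ℝ × ℝ^m`. -/
noncomputable def pderivY {m : ℕ} (j : Fin m) (v : ℝ × (Fin m → ℝ) → ℂ)
    (p : ℝ × (Fin m → ℝ)) : ℂ :=
  fderiv ℝ v p (0, Pi.single j 1)

/-- The boundary Laplacian `Δ_y = Σⱼ ∂²/∂yⱼ²`. -/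
noncomputable def lapY {m : ℕ} (v : ℝ × (Fin m → ℝ) → ℂ) (p : ℝ × (Fin m → ℝ)) : ℂ :=
  ∑ j, pderivY j (pderivY j v) p

/-- The model Klein–Gordon operator
`P v = −(x∂ₓ)² v + (n−1) x∂ₓ v + x² Δ_y v − λ v` on `(0,∞) × ℝ^{n−1}`. -/
noncomputable def Pmodel (n : ℕ) (lam : ℂ) (v : ℝ × (Fin (n - 1) → ℝ) → ℂ)
    (p : ℝ × (Fin (n - 1) → ℝ)) : ℂ :=
  -((p.1 : ℂ) * pderivX (fun q => (q.1 : ℂ) * pderivX v q) p)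
    + ((n : ℂ) - 1) * ((p.1 : ℂ) * pderivX v p)
    + (p.1 : ℂ) ^ 2 * lapY v p
    - lam * v p

/-- Smooth functions vanishing outside `K`. -/
def GoodFn {m : ℕ} {W : Type*} [NormedAddCommGroup W] [NormedSpace ℝ W]
    (K : Set (ℝ × (Fin m → ℝ))) (f : ℝ × (Fin m → ℝ) → W) : Prop :=
  ContDiff ℝ (⊤ : ℕ∞) f ∧ ∀ p, p ∉ K → f p = 0

section Good
variable {m : ℕ} {K : Set (ℝ × (Fin m → ℝ))}

theorem GoodFn.tsupport_sub {W : Type*} [NormedAddCommGroup W] [NormedSpace ℝ W]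
    (hK : IsCompact K) {f : ℝ × (Fin m → ℝ) → W} (hf : GoodFn K f) : tsupport f ⊆ K := by
  refine closure_minimal (fun p hp => ?_) hK.isClosed
  by_contra h
  exact hp (hf.2 p h)

theorem GoodFn.diff {W : Type*} [NormedAddCommGroup W] [NormedSpace ℝ W]
    {f : ℝ × (Fin m → ℝ) → W} (hf : GoodFn K f) : Differentiable ℝ f :=
  hf.1.differentiable (by simp)

theorem GoodFn.fderiv_app {W : Type*} [NormedAddCommGroup W] [NormedSpace ℝ W]
    (hK : IsCompact K) {f : ℝ × (Fin m → ℝ) → W} (hf : GoodFn K f) (e : ℝ × (Fin m → ℝ)) :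
    GoodFn K (fun p => fderiv ℝ f p e) := by
  refine ⟨?_, fun p hp => ?_⟩
  · exact (hf.1.fderiv_right (m := (⊤ : ℕ∞)) (by simp)).clm_apply contDiff_const
  · have : fderiv ℝ f p = 0 := by
      by_contra h
      exact hp (hf.tsupport_sub hK (support_fderiv_subset ℝ h))
    simp [this]

theorem GoodFn.pdX (hK : IsCompact K) {f : ℝ × (Fin m → ℝ) → ℂ} (hf : GoodFn K f) :
    GoodFn K (pderivX f) := hf.fderiv_app hK _

theorem GoodFn.pdY (hK : IsCompact K) {f : ℝ × (Fin m → ℝ) → ℂ} (hf : GoodFn K f) (j : Fin m) :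
    GoodFn K (pderivY j f) := hf.fderiv_app hK _

theorem GoodFn.rmul {f : ℝ × (Fin m → ℝ) → ℝ} (c : ℝ) (hf : GoodFn K f) :
    GoodFn K (fun p => c * f p) :=
  ⟨contDiff_const.mul hf.1, fun p hp => by simp [hf.2 p hp]⟩

theorem GoodFn.mulx {f : ℝ × (Fin m → ℝ) → ℂ} (hf : GoodFn K f) :
    GoodFn K (fun p => (p.1 : ℂ) * f p) :=
  ⟨(Complex.ofRealCLM.contDiff.comp contDiff_fst).mul hf.1, fun p hp => by simp [hf.2 p hp]⟩

theorem GoodFn.add {W : Type*} [NormedAddCommGroup W] [NormedSpace ℝ W]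
    {f g : ℝ × (Fin m → ℝ) → W} (hf : GoodFn K f) (hg : GoodFn K g) :
    GoodFn K (fun p => f p + g p) :=
  ⟨hf.1.add hg.1, fun p hp => by simp [hf.2 p hp, hg.2 p hp]⟩

theorem GoodFn.sum {W : Type*} [NormedAddCommGroup W] [NormedSpace ℝ W] {ι : Type*} [Fintype ι]
    {f : ι → ℝ × (Fin m → ℝ) → W} (hf : ∀ i, GoodFn K (f i)) :
    GoodFn K (fun p => ∑ i, f i p) :=
  ⟨ContDiff.sum fun i _ => (hf i).1, fun p hp => Finset.sum_eq_zero fun i _ => (hf i).2 p hp⟩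

theorem GoodFn.cmul {f : ℝ × (Fin m → ℝ) → ℂ} (c : ℂ) (hf : GoodFn K f) :
    GoodFn K (fun p => c * f p) :=
  ⟨contDiff_const.mul hf.1, fun p hp => by simp [hf.2 p hp]⟩

theorem GoodFn.inner {f g : ℝ × (Fin m → ℝ) → ℂ} (hf : GoodFn K f) (hg : GoodFn K g) :
    GoodFn K (fun p => inner ℝ (f p) (g p)) :=
  ⟨hf.1.inner ℝ hg.1, fun p hp => by simp [hf.2 p hp]⟩

theorem GoodFn.integrable (hK : IsCompact K) (hKp : K ⊆ {p | 0 < p.1})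
    {f : ℝ × (Fin m → ℝ) → ℝ} (hf : GoodFn K f) (r : ℝ) :
    Integrable (fun p : ℝ × (Fin m → ℝ) => p.1 ^ r * f p) := by
  have h1 : Continuous (fun p : ℝ × (Fin m → ℝ) => p.1 ^ r * f p) := by
    refine continuous_of_tsupport fun p hp => ?_
    have hp' : p ∈ tsupport f := tsupport_mul_subset_right hp
    have h0 : (0 : ℝ) < p.1 := hKp (hf.tsupport_sub hK hp')
    exact (continuousAt_fst.rpow_const (Or.inl h0.ne')).mul hf.1.continuous.continuousAt
  refine h1.integrable_of_hasCompactSupport ?_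
  exact HasCompactSupport.intro hK fun p hp => by simp [hf.2 p hp]

/-- the weighted integral -/
noncomputable def JJ {m : ℕ} (r : ℝ) (f : ℝ × (Fin m → ℝ) → ℝ) : ℝ :=
  ∫ p in Set.Ioi (0 : ℝ) ×ˢ (Set.univ : Set (Fin m → ℝ)), p.1 ^ r * f p

theorem JJ_congr {r r' : ℝ} {f g : ℝ × (Fin m → ℝ) → ℝ}
    (h : ∀ p : ℝ × (Fin m → ℝ), 0 < p.1 → p.1 ^ r * f p = p.1 ^ r' * g p) :
    JJ r f = JJ r' g := by
  refine setIntegral_congr_fun (measurableSet_Ioi.prod MeasurableSet.univ) fun p hp => ?_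
  exact h p hp.1

theorem JJ_full (hKp : K ⊆ {p | 0 < p.1})
    {f : ℝ × (Fin m → ℝ) → ℝ} (hf : GoodFn K f) (r : ℝ) :
    JJ r f = ∫ p : ℝ × (Fin m → ℝ), p.1 ^ r * f p := by
  refine setIntegral_eq_integral_of_forall_compl_eq_zero fun p hp => ?_
  rw [hf.2 p fun h => hp ⟨hKp h, trivial⟩, mul_zero]

theorem JJ_add (hK : IsCompact K) (hKp : K ⊆ {p | 0 < p.1})
    {f g : ℝ × (Fin m → ℝ) → ℝ} (hf : GoodFn K f) (hg : GoodFn K g) (r : ℝ) :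
    JJ r (fun p => f p + g p) = JJ r f + JJ r g := by
  unfold JJ
  rw [← integral_add (hf.integrable hK hKp r).integrableOn (hg.integrable hK hKp r).integrableOn]
  simp only [mul_add]

theorem JJ_smul (r c : ℝ) (f : ℝ × (Fin m → ℝ) → ℝ) :
    JJ r (fun p => c * f p) = c * JJ r f := by
  unfold JJ
  rw [← integral_const_mul]
  congr 1; ext p; ring

theorem JJ_sum (hK : IsCompact K) (hKp : K ⊆ {p | 0 < p.1}) {ι : Type*} [Fintype ι]
    {f : ι → ℝ × (Fin m → ℝ) → ℝ} (hf : ∀ i, GoodFn K (f i)) (r : ℝ) :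
    JJ r (fun p => ∑ i, f i p) = ∑ i, JJ r (f i) := by
  unfold JJ
  rw [← integral_finsetSum _ fun i _ => ((hf i).integrable hK hKp r).integrableOn]
  simp only [Finset.mul_sum]

theorem JJ_mono (hK : IsCompact K) (hKp : K ⊆ {p | 0 < p.1})
    {f g : ℝ × (Fin m → ℝ) → ℝ} (hf : GoodFn K f) (hg : GoodFn K g) (r : ℝ)
    (h : ∀ p, f p ≤ g p) : JJ r f ≤ JJ r g := by
  refine setIntegral_mono_on (hf.integrable hK hKp r).integrableOn
    (hg.integrable hK hKp r).integrableOn (measurableSet_Ioi.prod MeasurableSet.univ)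
    fun p hp => ?_
  exact mul_le_mul_of_nonneg_left (h p) (Real.rpow_nonneg (le_of_lt hp.1) r)

theorem JJ_nonneg (r : ℝ) {f : ℝ × (Fin m → ℝ) → ℝ} (h : ∀ p, 0 ≤ f p) : 0 ≤ JJ r f :=
  setIntegral_nonneg (measurableSet_Ioi.prod MeasurableSet.univ) fun p hp =>
    mul_nonneg (Real.rpow_nonneg (le_of_lt hp.1) r) (h p)

/-- integration by parts -/
theorem JJ_ibp (hK : IsCompact K) (hKp : K ⊆ {p | 0 < p.1})
    {f : ℝ × (Fin m → ℝ) → ℝ} (hf : GoodFn K f) (r : ℝ) (e : ℝ × (Fin m → ℝ)) :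
    JJ r (fun p => fderiv ℝ f p e) = - (r * e.1 * JJ (r - 1) f) := by
  rw [JJ_full hKp (hf.fderiv_app hK e), JJ_full hKp hf]
  have hd : ∀ p : ℝ × (Fin m → ℝ), 0 < p.1 →
      HasFDerivAt (fun p : ℝ × (Fin m → ℝ) => p.1 ^ r)
        ((r * p.1 ^ (r - 1)) • ContinuousLinearMap.fst ℝ ℝ (Fin m → ℝ)) p := fun p hp =>
    (hasFDerivAt_fst (𝕜 := ℝ) (p := p)).rpow_const (Or.inl hp.ne')
  have heq : ∀ p : ℝ × (Fin m → ℝ), fderiv ℝ (fun p : ℝ × (Fin m → ℝ) => p.1 ^ r) p e * f p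
      = r * e.1 * (p.1 ^ (r - 1) * f p) := by
    intro p
    by_cases hp : p ∈ K
    · rw [(hd p (hKp hp)).fderiv]
      simp
      ring
    · simp [hf.2 p hp]
  have : (volume : Measure (ℝ × (Fin m → ℝ))).IsAddHaarMeasure :=
    inferInstanceAs (Measure.IsAddHaarMeasure
      ((volume : Measure ℝ).prod (volume : Measure (Fin m → ℝ))))
  have := integral_mul_fderiv_eq_neg_fderiv_mul_of_integrable (μ := volume)
    (f := fun p : ℝ × (Fin m → ℝ) => p.1 ^ r) (g := f) (v := e)
    (by
      simp only [heq]
      exact (hf.integrable hK hKp (r - 1)).const_mul _)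
    ((hf.fderiv_app hK e).integrable hK hKp r) (hf.integrable hK hKp r)
    (fun p hp => (hd p (hKp (hf.tsupport_sub hK hp))).differentiableAt)
    (fun p _ => hf.diff p)
  rw [this]
  simp only [heq]
  rw [integral_const_mul]

theorem JJ_ibpX (hK : IsCompact K) (hKp : K ⊆ {p | 0 < p.1})
    {f g : ℝ × (Fin m → ℝ) → ℂ} (hf : GoodFn K f) (hg : GoodFn K g) (s : ℝ) :
    JJ (s - 1) (fun p => inner ℝ (f p) ((p.1 : ℂ) * pderivX g p))
      + JJ (s - 1) (fun p => inner ℝ ((p.1 : ℂ) * pderivX f p) (g p))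
      = - (s * JJ (s - 1) (fun p => inner ℝ (f p) (g p))) := by
  have h := JJ_ibp hK hKp (hf.inner hg) s (1, 0)
  rw [← JJ_add hK hKp (hf.inner (hg.pdX hK).mulx)
    ((hf.pdX hK).mulx.inner hg)]
  rw [mul_one] at h
  rw [← h]
  refine JJ_congr fun p hp => ?_
  rw [fderiv_inner_apply ℝ (hf.diff p) (hg.diff p), Real.rpow_sub_one hp.ne']
  simp only [pderivX, ← Complex.real_smul, inner_smul_left, inner_smul_right]
  simp
  field_simp

theorem JJ_ibpY (hK : IsCompact K) (hKp : K ⊆ {p | 0 < p.1})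
    {f g : ℝ × (Fin m → ℝ) → ℂ} (hf : GoodFn K f) (hg : GoodFn K g) (s : ℝ) (j : Fin m) :
    JJ s (fun p => inner ℝ (f p) (pderivY j g p))
      + JJ s (fun p => inner ℝ (pderivY j f p) (g p)) = 0 := by
  have h := JJ_ibp hK hKp (hf.inner hg) s (0, Pi.single j 1)
  simp only [mul_zero, zero_mul, neg_zero] at h
  rw [← JJ_add hK hKp (hf.inner (hg.pdY hK j)) ((hf.pdY hK j).inner hg), ← h]
  refine JJ_congr fun p hp => ?_
  rw [fderiv_inner_apply ℝ (hf.diff p) (hg.diff p)]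
  rfl

theorem comm_deriv {v : ℝ × (Fin m → ℝ) → ℂ} (hv : ContDiff ℝ (⊤ : ℕ∞) v) (j : Fin m)
    (p : ℝ × (Fin m → ℝ)) :
    pderivY j (fun q => (q.1 : ℂ) * pderivX v q) p = (p.1 : ℂ) * pderivX (pderivY j v) p := by
  have hd : DifferentiableAt ℝ (fderiv ℝ v) p :=
    (hv.fderiv_right (m := (⊤ : ℕ∞)) (by simp)).differentiable (by simp) p
  have hs : IsSymmSndFDerivAt ℝ v p := by
    refine ContDiffAt.isSymmSndFDerivAt (n := 2) ?_ (by simp)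
    exact (contDiff_infty.1 hv 2).contDiffAt
  have h1 : HasFDerivAt (fun q : ℝ × (Fin m → ℝ) => (q.1 : ℂ))
      (Complex.ofRealCLM.comp (ContinuousLinearMap.fst ℝ ℝ (Fin m → ℝ))) p :=
    (Complex.ofRealCLM.comp (ContinuousLinearMap.fst ℝ ℝ (Fin m → ℝ))).hasFDerivAt
  have h2 : ∀ e, HasFDerivAt (fun q => fderiv ℝ v q e) ((fderiv ℝ (fderiv ℝ v) p).flip e) p := by
    intro e
    have := hd.hasFDerivAt.clm_apply (hasFDerivAt_const e p)
    simpa using this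
  have h3 := h1.mul (h2 (1, 0))
  have e1 : pderivY j (fun q => (q.1 : ℂ) * pderivX v q) p
    = (p.1 : ℂ) * fderiv ℝ (fderiv ℝ v) p (0, Pi.single j 1) (1, 0) := by
    unfold pderivY pderivX
    change fderiv ℝ ((fun q : ℝ × (Fin m → ℝ) => (q.1 : ℂ)) * fun q => fderiv ℝ v q (1, 0)) p _ = _
    rw [h3.fderiv]
    simp
  have e2 : pderivX (pderivY j v) p = fderiv ℝ (fderiv ℝ v) p (1, 0) (0, Pi.single j 1) := by
    unfold pderivY pderivX
    rw [(h2 _).fderiv]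
    simp
  rw [e1, e2, hs.eq]

theorem JJ_lap (hK : IsCompact K) (hKp : K ⊆ {p | 0 < p.1})
    {v g : ℝ × (Fin m → ℝ) → ℂ} (hv : GoodFn K v) (hg : GoodFn K g) (s : ℝ) :
    JJ (s - 1) (fun p => inner ℝ (g p) ((p.1 : ℂ) * ((p.1 : ℂ) * lapY v p)))
      = - ∑ j, JJ (s + 1) (fun p => inner ℝ (pderivY j g p) (pderivY j v p)) := by
  have h : ∀ j, JJ (s + 1) (fun p => inner ℝ (g p) (pderivY j (pderivY j v) p))
      = - JJ (s + 1) (fun p => inner ℝ (pderivY j g p) (pderivY j v p)) := fun j => by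
    have := JJ_ibpY hK hKp hg (hv.pdY hK j) (s + 1) j
    linarith
  rw [← Finset.sum_neg_distrib]
  simp only [← h]
  rw [← JJ_sum hK hKp (fun j => hg.inner ((hv.pdY hK j).pdY hK j))]
  refine JJ_congr fun p hp => ?_
  rw [show s + 1 = (s - 1) + 1 + 1 by ring, Real.rpow_add_one hp.ne', Real.rpow_add_one hp.ne']
  simp only [lapY, ← Complex.real_smul, inner_smul_right, inner_sum]
  ring

theorem young_inner (a b : ℂ) {ε : ℝ} (hε : 0 < ε) (σ : ℝ) (hσ : σ ^ 2 = 1) :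
    σ * inner ℝ a b ≤ ε / 2 * inner ℝ a a + 1 / (2 * ε) * inner ℝ b b := by
  have h : 0 ≤ inner ℝ ((ε * σ) • a - b) ((ε * σ) • a - b) := real_inner_self_nonneg
  rw [real_inner_sub_sub_self] at h
  simp only [inner_smul_left, inner_smul_right, conj_trivial] at h
  have e1 : ε * σ * (ε * σ * inner ℝ a a) = ε ^ 2 * inner ℝ a a := by
    linear_combination (ε ^ 2 * inner ℝ a a) * hσ
  rw [e1] at h
  have : ε / 2 * inner ℝ a a + 1 / (2 * ε) * inner ℝ b b - σ * inner ℝ a b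
    = 1 / (2 * ε) * (ε ^ 2 * inner ℝ a a - 2 * (ε * σ * inner ℝ a b) + inner ℝ b b) := by
    field_simp
    ring
  have h2 := mul_nonneg (by positivity : 0 ≤ 1 / (2 * ε)) h
  linarith

theorem JJ_young (hK : IsCompact K) (hKp : K ⊆ {p | 0 < p.1})
    {f g : ℝ × (Fin m → ℝ) → ℂ} (hf : GoodFn K f) (hg : GoodFn K g) (r : ℝ)
    {ε : ℝ} (hε : 0 < ε) :
    |JJ r (fun p => inner ℝ (f p) (g p))| ≤
      ε / 2 * JJ r (fun p => inner ℝ (f p) (f p))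
        + 1 / (2 * ε) * JJ r (fun p => inner ℝ (g p) (g p)) := by
  have key : ∀ σ : ℝ, σ ^ 2 = 1 → σ * JJ r (fun p => inner ℝ (f p) (g p)) ≤
      ε / 2 * JJ r (fun p => inner ℝ (f p) (f p))
        + 1 / (2 * ε) * JJ r (fun p => inner ℝ (g p) (g p)) := by
    intro σ hσ
    rw [← JJ_smul, ← JJ_smul, ← JJ_smul, ← JJ_add hK hKp ((hf.inner hf).rmul _)
      ((hg.inner hg).rmul _)]
    exact JJ_mono hK hKp ((hf.inner hg).rmul _)
      (((hf.inner hf).rmul _).add ((hg.inner hg).rmul _)) r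
      fun p => young_inner _ _ hε σ hσ
  rw [abs_le]
  have h1 := key 1 (by norm_num)
  have h2 := key (-1) (by norm_num)
  constructor <;> linarith

theorem JJ_hardy (hK : IsCompact K) (hKp : K ⊆ {p | 0 < p.1})
    {v : ℝ × (Fin m → ℝ) → ℂ} (hv : GoodFn K v) (s : ℝ) :
    s ^ 2 / 4 * JJ (s - 1) (fun p => inner ℝ (v p) (v p)) ≤
      JJ (s - 1) (fun p => inner ℝ ((p.1 : ℂ) * pderivX v p) ((p.1 : ℂ) * pderivX v p)) := by
  have hU := (hv.pdX hK).mulx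
  have h1 := JJ_ibpX hK hKp hv hv s
  have h0 : 0 ≤ JJ (s - 1) (fun p => s ^ 2 / 4 * inner ℝ (v p) (v p)
      + ((s / 2) * inner ℝ (v p) ((p.1 : ℂ) * pderivX v p)
      + ((s / 2) * inner ℝ ((p.1 : ℂ) * pderivX v p) (v p)
      + inner ℝ ((p.1 : ℂ) * pderivX v p) ((p.1 : ℂ) * pderivX v p)))) := by
    refine JJ_nonneg _ fun p => ?_
    have : 0 ≤ inner ℝ ((s / 2) • v p + (p.1 : ℂ) * pderivX v p)
      ((s / 2) • v p + (p.1 : ℂ) * pderivX v p) := real_inner_self_nonneg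
    simp only [inner_add_left, inner_add_right, inner_smul_left, inner_smul_right,
      conj_trivial] at this
    linarith
  rw [JJ_add hK hKp ((hv.inner hv).rmul _) (((hv.inner hU).rmul _).add
      (((hU.inner hv).rmul _).add (hU.inner hU))),
    JJ_add hK hKp ((hv.inner hU).rmul _) (((hU.inner hv).rmul _).add (hU.inner hU)),
    JJ_add hK hKp ((hU.inner hv).rmul _) (hU.inner hU), JJ_smul, JJ_smul, JJ_smul] at h0
  linear_combination h0 + s / 2 * h1

/-- pairing of `P v` with a function -/
theorem JJ_pair (hK : IsCompact K) (hKp : K ⊆ {p | 0 < p.1})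
    {g a b c d : ℝ × (Fin m → ℝ) → ℂ} (hg : GoodFn K g) (ha : GoodFn K a) (hb : GoodFn K b)
    (hc : GoodFn K c) (hd : GoodFn K d) (r N lam : ℝ) :
    JJ r (fun p => inner ℝ (g p) (-(a p) + (N : ℂ) * b p + c p - (lam : ℂ) * d p)) =
      - JJ r (fun p => inner ℝ (g p) (a p)) + N * JJ r (fun p => inner ℝ (g p) (b p))
      + JJ r (fun p => inner ℝ (g p) (c p)) - lam * JJ r (fun p => inner ℝ (g p) (d p)) := by
  have e : ∀ p, inner ℝ (g p) (-(a p) + (N : ℂ) * b p + c p - (lam : ℂ) * d p)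
     = (-1) * inner ℝ (g p) (a p) + (N * inner ℝ (g p) (b p) + (inner ℝ (g p) (c p)
       + (-lam) * inner ℝ (g p) (d p))) := by
    intro p
    simp only [← Complex.real_smul, inner_sub_right, inner_add_right, inner_neg_right,
      inner_smul_right]
    ring
  simp only [e]
  rw [JJ_add hK hKp ((hg.inner ha).rmul _) (((hg.inner hb).rmul _).add
      ((hg.inner hc).add ((hg.inner hd).rmul _))),
    JJ_add hK hKp ((hg.inner hb).rmul _) ((hg.inner hc).add ((hg.inner hd).rmul _)),
    JJ_add hK hKp (hg.inner hc) ((hg.inner hd).rmul _), JJ_smul, JJ_smul, JJ_smul]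
  ring

theorem core (hK : IsCompact K) (hKp : K ⊆ {p | 0 < p.1})
    {v Pv : ℝ × (Fin m → ℝ) → ℂ} (hv : GoodFn K v) (s N lam : ℝ)
    (hPv : ∀ p, Pv p = -((p.1 : ℂ) * pderivX (fun q => (q.1 : ℂ) * pderivX v q) p)
      + (N : ℂ) * ((p.1 : ℂ) * pderivX v p) + (p.1 : ℂ) * ((p.1 : ℂ) * lapY v p)
      - (lam : ℂ) * v p)
    (A B Q F : ℝ) (hA : A = JJ (s - 1) (fun p => inner ℝ (v p) (v p)))
    (hB : B = JJ (s - 1)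
      (fun p => inner ℝ ((p.1 : ℂ) * pderivX v p) ((p.1 : ℂ) * pderivX v p)))
    (hQ : Q = ∑ j, JJ (s + 1) (fun p => inner ℝ (pderivY j v p) (pderivY j v p)))
    (hF : F = JJ (s - 1) (fun p => inner ℝ (Pv p) (Pv p))) :
    ∃ K1 K2 : ℝ, K1 = (s / 2 + N) * B + (s + 2) / 2 * Q + lam * s / 2 * A ∧
      K2 = -(s ^ 2 / 2 + N * s / 2 + lam) * A + B - Q ∧
      s ^ 2 / 4 * A ≤ B ∧ 0 ≤ A ∧ 0 ≤ B ∧ 0 ≤ Q ∧ 0 ≤ F ∧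
      (∀ ε : ℝ, 0 < ε → |K1| ≤ ε / 2 * B + 1 / (2 * ε) * F) ∧
      (∀ ε : ℝ, 0 < ε → |K2| ≤ ε / 2 * A + 1 / (2 * ε) * F) := by
  have hU := (hv.pdX hK).mulx
  have hV := (hU.pdX hK).mulx
  have hL : GoodFn K (fun p => (p.1 : ℂ) * ((p.1 : ℂ) * lapY v p)) :=
    GoodFn.mulx (GoodFn.mulx (GoodFn.sum fun j => (hv.pdY hK j).pdY hK j))
  have hPv' : Pv = fun p => -((p.1 : ℂ) * pderivX (fun q => (q.1 : ℂ) * pderivX v q) p)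
      + (N : ℂ) * ((p.1 : ℂ) * pderivX v p) + (p.1 : ℂ) * ((p.1 : ℂ) * lapY v p)
      - (lam : ℂ) * v p := funext hPv
  have hP : GoodFn K Pv := by
    have := (((hV.cmul (-1)).add (hU.cmul N)).add hL).add (hv.cmul (-lam))
    convert this using 1
    funext p
    rw [hPv]; ring
  have i1 := JJ_ibpX hK hKp hv hv s
  have i2 := JJ_ibpX hK hKp hU hU s
  have i3 := JJ_ibpX hK hKp hv hU s
  have i4 := JJ_lap hK hKp hv hv s
  have i5 := JJ_lap hK hKp hv hU s
  have i6 : ∀ j, JJ (s + 1) (fun p => inner ℝ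
      (pderivY j (fun q => (q.1 : ℂ) * pderivX v q) p) (pderivY j v p))
      = -((s + 2) / 2) * JJ (s + 1) (fun p => inner ℝ (pderivY j v p) (pderivY j v p)) := by
    intro j
    simp only [comm_deriv hv.1]
    have := JJ_ibpX hK hKp (hv.pdY hK j) (hv.pdY hK j) (s + 2)
    rw [show s + 2 - 1 = s + 1 by ring] at this
    simp only [real_inner_comm (pderivY j v _) ((_ : ℂ) * pderivX (pderivY j v) _)] at this ⊢
    linarith
  simp only [i6, ← Finset.mul_sum] at i5
  rw [← hQ] at i4 i5
  have c1 : ∀ p, inner ℝ ((p.1 : ℂ) * pderivX v p) (v p)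
    = inner ℝ (v p) ((p.1 : ℂ) * pderivX v p) := fun p => real_inner_comm _ _
  have c2 : ∀ p, inner ℝ ((p.1 : ℂ) * pderivX (fun q => (q.1 : ℂ) * pderivX v q) p)
      ((p.1 : ℂ) * pderivX v p) = inner ℝ ((p.1 : ℂ) * pderivX v p)
      ((p.1 : ℂ) * pderivX (fun q => (q.1 : ℂ) * pderivX v q) p) := fun p => real_inner_comm _ _
  simp only [c1] at i1
  simp only [c2] at i2
  refine ⟨JJ (s - 1) (fun p => inner ℝ ((p.1 : ℂ) * pderivX v p) (Pv p)),
    JJ (s - 1) (fun p => inner ℝ (v p) (Pv p)), ?_, ?_, ?_, ?_, ?_, ?_, ?_, ?_, ?_⟩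
  · rw [hPv', JJ_pair hK hKp hU hV hU hL hv]
    simp only [c1]
    rw [i5, hA, ← hB]
    rw [← hB] at i2
    linear_combination -(1 / 2) * i2 - lam / 2 * i1
  · rw [hPv', JJ_pair hK hKp hv hV hU hL hv]
    rw [i4, ← hA]
    rw [← hB] at i3
    rw [← hA] at i1
    linear_combination - i3 + (N + s) / 2 * i1
  · rw [hA, hB]
    exact JJ_hardy hK hKp hv s
  · rw [hA]; exact JJ_nonneg _ fun p => real_inner_self_nonneg
  · rw [hB]; exact JJ_nonneg _ fun p => real_inner_self_nonneg
  · rw [hQ]; exact Finset.sum_nonneg fun j _ => JJ_nonneg _ fun p => real_inner_self_nonneg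
  · rw [hF]; exact JJ_nonneg _ fun p => real_inner_self_nonneg
  · intro ε hε
    rw [hB, hF]
    exact JJ_young hK hKp hU hP _ hε
  · intro ε hε
    rw [hA, hF]
    exact JJ_young hK hKp hv hP _ hε

end Good

/-- choice of the multiplier -/
theorem choose_c (κ lΛ l : ℝ) (hlΛ : lΛ = Real.sqrt (max κ 0))
    (hl : (l < min (1 / 2) lΛ ∧ l ≠ -lΛ) ∨ max (1 / 2) lΛ < l) :
    ∃ σ c : ℝ, σ ^ 2 = 1 ∧ 0 < σ * (c - l) ∧ 0 < σ * (1 - l - c) ∧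
      0 < σ * ((l + c) * (κ - l ^ 2)) := by
  have h0 : 0 ≤ lΛ := hlΛ ▸ Real.sqrt_nonneg _
  have hsq : lΛ ^ 2 = max κ 0 := by rw [hlΛ, Real.sq_sqrt (le_max_right _ _)]
  have hκ : κ ≤ lΛ ^ 2 := hsq ▸ le_max_left _ _
  rcases hl with ⟨h1, h2⟩ | h
  · obtain ⟨h3, h4⟩ := lt_min_iff.1 h1
    rcases lt_or_gt_of_ne h2 with h5 | h5
    · refine ⟨1, 0, by norm_num, by linarith, by linarith, ?_⟩
      have : κ < l ^ 2 := by nlinarith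
      have := mul_pos (by linarith : 0 < -l) (sub_pos.2 this)
      linarith
    · have h6 : 0 < lΛ := by linarith
      have h7 : κ = lΛ ^ 2 := by
        rcases max_choice κ 0 with h | h
        · rw [hsq, h]
        · rw [h] at hsq; nlinarith
      have h8 : l ^ 2 < κ := by nlinarith
      refine ⟨1, (max l (-l) + (1 - l)) / 2, by norm_num, ?_, ?_, ?_⟩
      · have := le_max_left l (-l); linarith
      · have : max l (-l) < 1 - l := max_lt (by linarith) (by linarith)
        linarith
      · have := le_max_right l (-l)
        have := mul_pos (by linarith : 0 < l + (max l (-l) + (1 - l)) / 2) (sub_pos.2 h8)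
        linarith
  · obtain ⟨h3, h4⟩ := max_lt_iff.1 h
    refine ⟨-1, 1 / 2, by norm_num, by linarith, by linarith, ?_⟩
    have : κ < l ^ 2 := by nlinarith
    have := mul_pos (by linarith : 0 < l + 1 / 2) (sub_pos.2 this)
    linarith

/-- the final arithmetic -/
theorem final_arith (s N lam b σ α β γ : ℝ) (hσ : σ ^ 2 = 1)
    (hα : α = σ * (s / 2 + N + b)) (hβ : β = σ * ((s + 2) / 2 - b))
    (hγ : γ = σ * (lam * s / 2 - b * (s ^ 2 / 2 + N * s / 2 + lam)))
    (h1 : 0 < α) (h2 : 0 < β) (h3 : 0 < α * (s ^ 2 / 4) + γ) :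
    ∃ C : ℝ, 0 < C ∧ ∀ A B Q F K1 K2 : ℝ,
      K1 = (s / 2 + N) * B + (s + 2) / 2 * Q + lam * s / 2 * A →
      K2 = -(s ^ 2 / 2 + N * s / 2 + lam) * A + B - Q →
      s ^ 2 / 4 * A ≤ B → 0 ≤ A → 0 ≤ B → 0 ≤ Q → 0 ≤ F →
      (∀ ε : ℝ, 0 < ε → |K1| ≤ ε / 2 * B + 1 / (2 * ε) * F) →
      (∀ ε : ℝ, 0 < ε → |K2| ≤ ε / 2 * A + 1 / (2 * ε) * F) → A + B + Q ≤ C * F := by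
  obtain ⟨δ, hδ, d1, d2, d3⟩ : ∃ δ : ℝ, 0 < δ ∧ δ ≤ α ∧ δ ≤ β ∧
      δ * (1 + s ^ 2 / 4) ≤ α * (s ^ 2 / 4) + γ := by
    have hp : 0 < 1 + s ^ 2 / 4 := by positivity
    refine ⟨min α (min β ((α * (s ^ 2 / 4) + γ) / (1 + s ^ 2 / 4))), ?_, min_le_left _ _,
      (min_le_right _ _).trans (min_le_left _ _), ?_⟩
    · exact lt_min h1 (lt_min h2 (div_pos h3 hp))
    · rw [← le_div_iff₀ hp]
      exact (min_le_right _ _).trans (min_le_right _ _)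
  set t := 1 + |b| with ht
  have htp : 0 < t := by positivity
  have hε : 0 < δ / t := by positivity
  refine ⟨(t / δ) ^ 2, by positivity, ?_⟩
  intro A B Q F K1 K2 e1 e2 hH hA hB hQ hF y1 y2
  have z1 := y1 _ hε
  have z2 := y2 _ hε
  have low : δ * (A + B + Q) ≤ σ * (K1 + b * K2) := by
    have : σ * (K1 + b * K2) = α * B + β * Q + γ * A := by
      rw [e1, e2, hα, hβ, hγ]; ring
    rw [this]
    have q1 := mul_le_mul_of_nonneg_left hH (sub_nonneg.2 d1)
    have q2 := mul_le_mul_of_nonneg_right d2 hQ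
    have q3 := mul_le_mul_of_nonneg_right d3 hA
    linarith
  have hσ1 : |σ| = 1 := by
    rw [← sq_abs] at hσ
    nlinarith [abs_nonneg σ]
  have up : σ * (K1 + b * K2) ≤ |K1| + |b| * |K2| := by
    calc σ * (K1 + b * K2) ≤ |σ * (K1 + b * K2)| := le_abs_self _
      _ = |K1 + b * K2| := by rw [abs_mul, hσ1, one_mul]
      _ ≤ |K1| + |b| * |K2| := by rw [← abs_mul]; exact abs_add_le _ _
  have z3 := mul_le_mul_of_nonneg_left z2 (abs_nonneg b)
  have bB : |K1| + |b| * |K2| ≤ t * (δ / t / 2 * (A + B) + 1 / (2 * (δ / t)) * F) := by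
    have w1 : 0 ≤ δ / t / 2 * A := by positivity
    have w2 : 0 ≤ |b| * (δ / t / 2 * B) := by positivity
    rw [ht] at *
    linarith
  have fin : t * (δ / t / 2 * (A + B) + 1 / (2 * (δ / t)) * F)
      = δ / 2 * (A + B) + δ / 2 * ((t / δ) ^ 2 * F) := by
    field_simp
  have : δ / 2 * (A + B + Q) ≤ δ / 2 * ((t / δ) ^ 2 * F) := by
    have : 0 ≤ δ * Q := by positivity
    linarith
  exact le_of_mul_le_mul_left this (by positivity)


/-- the weighted a priori estimate
`‖x^{−l} v‖²_{H¹₀} ≤ C ‖x^{−l} P v‖²_{L²}` (with respect to `x^{−n} dx dy`)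
for all smooth compactly supported `v` on `(0,∞) × ℝ^{n−1}`, whenever
`l < min(1/2, l(λ))` and `l ≠ −l(λ)`, or `l > max(1/2, l(λ))`. -/
theorem stmt5 (n : ℕ) (hn : 2 ≤ n) (lam : ℝ) (lΛ : ℝ)
    (hlΛ : lΛ = Real.sqrt (max (((((n : ℝ) - 1) / 2) ^ 2) - lam) 0))
    (l : ℝ)
    (hl : (l < min (1 / 2) lΛ ∧ l ≠ -lΛ) ∨ max (1 / 2) lΛ < l) :
    ∃ C : ℝ, 0 < C ∧
      ∀ v : ℝ × (Fin (n - 1) → ℝ) → ℂ,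
        ContDiff ℝ (⊤ : ℕ∞) v → HasCompactSupport v →
        tsupport v ⊆ {p : ℝ × (Fin (n - 1) → ℝ) | 0 < p.1} →
        (∫ p in Set.Ioi (0 : ℝ) ×ˢ (Set.univ : Set (Fin (n - 1) → ℝ)),
            p.1 ^ (-2 * l - (n : ℝ)) *
              (‖v p‖ ^ 2 + ‖(p.1 : ℂ) * pderivX v p‖ ^ 2
                + p.1 ^ 2 * ∑ j, ‖pderivY j v p‖ ^ 2))
          ≤ C * ∫ p in Set.Ioi (0 : ℝ) ×ˢ (Set.univ : Set (Fin (n - 1) → ℝ)),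
              p.1 ^ (-2 * l - (n : ℝ)) * ‖Pmodel n (lam : ℂ) v p‖ ^ 2 := by
  obtain ⟨σ, c, hσ, c1, c2, c3⟩ := choose_c _ lΛ l hlΛ hl
  have hn1 : ((n - 1 : ℕ) : ℝ) = (n : ℝ) - 1 := by
    rw [Nat.cast_sub (by omega)]; simp
  obtain ⟨N, hN⟩ : ∃ N : ℝ, N = (n : ℝ) - 1 := ⟨_, rfl⟩
  obtain ⟨s, hs⟩ : ∃ s : ℝ, s = -2 * l - N := ⟨_, rfl⟩
  rw [← hN] at c3
  obtain ⟨C, hC, H⟩ := final_arith s N lam (c - N / 2) σ _ _ _ hσ rfl rfl rfl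
    (by rw [hs]; linarith) (by rw [hs]; linarith) (by rw [hs]; linarith)
  refine ⟨C, hC, fun v hv hvc hvs => ?_⟩
  have hg : GoodFn (tsupport v) v := ⟨hv, fun p hp => image_eq_zero_of_notMem_tsupport hp⟩
  have hK : IsCompact (tsupport v) := hvc
  have hw : -2 * l - (n : ℝ) = s - 1 := by rw [hs, hN]; ring
  obtain ⟨K1, K2, h1, h2, h3, h4, h5, h6, h7, h8, h9⟩ := core hK hvs hg
    (Pv := Pmodel n (lam : ℂ) v) s N lam
    (by
      intro p
      simp only [Pmodel, hN]
      push_cast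
      ring) _ _ _ _ rfl rfl rfl rfl
  have hfin := H _ _ _ _ K1 K2 h1 h2 h3 h4 h5 h6 h7 h8 h9
  have hU := (hg.pdX hK).mulx
  have hX : ∀ j, GoodFn (tsupport v) (fun p => inner ℝ ((p.1 : ℂ) * pderivY j v p)
      ((p.1 : ℂ) * pderivY j v p)) := fun j =>
    (hg.pdY hK j).mulx.inner (hg.pdY hK j).mulx
  have eQ : ∀ j, JJ (s + 1) (fun p => inner ℝ (pderivY j v p) (pderivY j v p))
      = JJ (s - 1) (fun p => inner ℝ ((p.1 : ℂ) * pderivY j v p)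
      ((p.1 : ℂ) * pderivY j v p)) := by
    intro j
    refine JJ_congr fun p hp => ?_
    rw [show s + 1 = (s - 1) + 1 + 1 by ring, Real.rpow_add_one hp.ne', Real.rpow_add_one hp.ne']
    simp only [← Complex.real_smul, inner_smul_right, inner_smul_left, conj_trivial]
    ring
  simp only [eQ] at hfin
  rw [← JJ_sum hK hvs hX, ← JJ_add hK hvs (hg.inner hg) (hU.inner hU),
    ← JJ_add hK hvs ((hg.inner hg).add (hU.inner hU)) (GoodFn.sum hX)] at hfin
  rw [hw]
  convert hfin using 1
  · refine JJ_congr (r := s - 1) (r' := s - 1) fun p _ => ?_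
    simp only [real_inner_self_eq_norm_sq, norm_mul, mul_pow, Finset.mul_sum, Complex.norm_real,
      Real.norm_eq_abs, sq_abs]
  · congr 1
    refine JJ_congr (r := s - 1) (r' := s - 1) fun p _ => ?_
    simp only [real_inner_self_eq_norm_sq]
end

section
/- Let n ≥ 2 be an integer, λ ∈ ℝ, and l(λ) = √(max(((n−1)/2)² − λ, 0)). Suppose l ∈ ℝ satisfies either l < −max(1/2, l(λ)), or (l > −min(1/2, l(λ)) and l ≠ l(λ)). Then for every measurable f : (0,∞) × ℝ^{n−1} → ℂ with ∫∫ x^{−2l−n} |f|² dx dy < ∞, there exists a measurable u with ∫∫ x^{−2l−n} |u|² dx dy < ∞ which solves P u = f in the distributional sense: for every smooth compactly supported v : (0,∞) × ℝ^{n−1} → ℂ, ∫∫ u · conj(P v) · x^{−n} dx dy = ∫∫ f · conj(v) · x^{−n} dx dy. -/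
open MeasureTheory

namespace KG

/-- Test functions on the open half space. -/
structure Tst {m : ℕ} {G : Type*} [NormedAddCommGroup G] [NormedSpace ℝ G]
    (F : ℝ × (Fin m → ℝ) → G) : Prop where
  smooth : ContDiff ℝ (⊤ : ℕ∞) F
  cpt : HasCompactSupport F
  supp : tsupport F ⊆ {p : ℝ × (Fin m → ℝ) | 0 < p.1}

section
variable {m : ℕ} {G : Type*} [NormedAddCommGroup G] [NormedSpace ℝ G]
  {G' : Type*} [NormedAddCommGroup G'] [NormedSpace ℝ G']

theorem Tst.of_zero {F : ℝ × (Fin m → ℝ) → G} {H : ℝ × (Fin m → ℝ) → G'} (hF : Tst F)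
    (hH : ContDiff ℝ (⊤ : ℕ∞) H) (h : ∀ p, F p = 0 → H p = 0) : Tst H := by
  have hs : Function.support H ⊆ Function.support F := fun p hp hF0 => hp (h p hF0)
  exact ⟨hH, hF.cpt.mono hs, (closure_mono hs).trans hF.supp⟩

theorem Tst.eq_zero {F : ℝ × (Fin m → ℝ) → G} (hF : Tst F) {p : ℝ × (Fin m → ℝ)}
    (hp : ¬ 0 < p.1) : F p = 0 := by
  by_contra h
  exact hp (hF.supp (subset_tsupport _ h))

theorem Tst.diff {F : ℝ × (Fin m → ℝ) → G} (hF : Tst F) : Differentiable ℝ F :=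
  hF.smooth.differentiable (by simp)

theorem Tst.fderiv {F : ℝ × (Fin m → ℝ) → G} (hF : Tst F) (e : ℝ × (Fin m → ℝ)) :
    Tst (fun p => fderiv ℝ F p e) := by
  refine ⟨?_, hF.cpt.fderiv_apply (𝕜 := ℝ) e, (tsupport_fderiv_apply_subset ℝ e).trans hF.supp⟩
  exact (hF.smooth.fderiv_right (m := (⊤ : ℕ∞)) (by simp)).clm_apply contDiff_const

theorem Tst.add {F H : ℝ × (Fin m → ℝ) → G} (hF : Tst F) (hH : Tst H) :
    Tst (fun p => F p + H p) := by
  refine ⟨hF.smooth.add hH.smooth, hF.cpt.add hH.cpt, ?_⟩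
  refine (closure_mono (Function.support_add F H)).trans ?_
  rw [closure_union]
  exact Set.union_subset hF.supp hH.supp

theorem Tst.smul {F : ℝ × (Fin m → ℝ) → G} (hF : Tst F) {g : ℝ × (Fin m → ℝ) → ℝ}
    (hg : ContDiff ℝ (⊤ : ℕ∞) g) : Tst (fun p => g p • F p) :=
  hF.of_zero (hg.smul hF.smooth) (fun p hp => by simp [hp])

theorem Tst.csmul {F : ℝ × (Fin m → ℝ) → ℂ} (hF : Tst F) (c : ℂ) :
    Tst (fun p => c * F p) :=
  hF.of_zero (contDiff_const.mul hF.smooth) (fun p hp => by simp [hp])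

theorem Tst.inner {F H : ℝ × (Fin m → ℝ) → ℂ} (hF : Tst F) (hH : Tst H) :
    Tst (fun p => inner ℝ (F p) (H p)) :=
  hF.of_zero (hF.smooth.inner ℝ hH.smooth) (fun p hp => by simp [hp])

theorem Tst.rpow {F : ℝ × (Fin m → ℝ) → G} (hF : Tst F) (k : ℝ) :
    Tst (fun p => p.1 ^ k • F p) := by
  refine hF.of_zero ?_ (fun p hp => by simp [hp])
  rw [contDiff_iff_contDiffAt]
  intro p
  by_cases hp : 0 < p.1
  · exact (contDiffAt_fst.rpow_const_of_ne hp.ne').smul hF.smooth.contDiffAt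
  · have : p ∉ tsupport F := fun h => hp (hF.supp h)
    rw [notMem_tsupport_iff_eventuallyEq] at this
    refine (contDiffAt_const (c := (0 : G))).congr_of_eventuallyEq ?_
    filter_upwards [this] with q hq
    simp [hq]

theorem Tst.integrable {F : ℝ × (Fin m → ℝ) → G} (hF : Tst F) : Integrable F :=
  hF.smooth.continuous.integrable_of_hasCompactSupport hF.cpt

theorem Tst.integral_fderiv {F : ℝ × (Fin m → ℝ) → ℝ} (hF : Tst F) (e : ℝ × (Fin m → ℝ)) :
    ∫ p, _root_.fderiv ℝ F p e = 0 := by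
  have : (volume : Measure (ℝ × (Fin m → ℝ))).IsAddHaarMeasure := by
    rw [Measure.volume_eq_prod]; infer_instance
  have := integral_mul_fderiv_eq_neg_fderiv_mul_of_integrable (𝕜 := ℝ)
    (μ := (volume : Measure (ℝ × (Fin m → ℝ))))
    (f := fun _ => (1 : ℝ)) (g := F) (v := e) (by simp)
    (by simpa using (hF.fderiv e).integrable) (by simpa using hF.integrable)
    (fun x _ => differentiableAt_const _) (fun x _ => hF.diff x)
  simpa using this

/-- The open half space. -/
abbrev HS (m : ℕ) : Set (ℝ × (Fin m → ℝ)) := Set.Ioi (0 : ℝ) ×ˢ (Set.univ : Set (Fin m → ℝ))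

theorem measurableSet_HS : MeasurableSet (HS m) := measurableSet_Ioi.prod MeasurableSet.univ

/-- functions with weighted integral zero -/
structure Z (k : ℝ) (h : ℝ × (Fin m → ℝ) → ℝ) : Prop where
  int : IntegrableOn (fun p => p.1 ^ k * h p) (HS m)
  zero : ∫ p in HS m, p.1 ^ k * h p = 0

theorem Z.add {k : ℝ} {h h' : ℝ × (Fin m → ℝ) → ℝ} (H : Z k h) (H' : Z k h') :
    Z k (fun p => h p + h' p) := by
  constructor
  · simp only [mul_add]
    exact H.int.add H'.int
  · simp only [mul_add]
    rw [integral_add H.int H'.int, H.zero, H'.zero, add_zero]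

theorem Z.smul {k : ℝ} {h : ℝ × (Fin m → ℝ) → ℝ} (H : Z k h) (c : ℝ) :
    Z k (fun p => c * h p) := by
  have e : (fun p : ℝ × (Fin m → ℝ) => p.1 ^ k * (c * h p)) = fun p => c * (p.1 ^ k * h p) := by
    ext p; ring
  constructor
  · rw [e]; exact H.int.const_mul c
  · rw [e, integral_const_mul, H.zero, mul_zero]

theorem Z.sum {k : ℝ} {ι : Type*} (s : Finset ι) {h : ι → ℝ × (Fin m → ℝ) → ℝ}
    (H : ∀ i, Z k (h i)) : Z k (fun p => ∑ i ∈ s, h i p) := by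
  constructor
  · simp only [Finset.mul_sum]
    exact integrable_finsetSum _ fun i _ => (H i).int
  · simp only [Finset.mul_sum]
    rw [integral_finsetSum _ fun i _ => (H i).int]
    simp [(H _).zero]

theorem Tst.zX {F : ℝ × (Fin m → ℝ) → ℝ} (hF : Tst F) (k : ℝ) :
    Z k (fun p => p.1 * _root_.fderiv ℝ F p (1, 0) + (k + 1) * F p) := by
  have hT := hF.rpow (k + 1)
  have e : ∀ p ∈ HS m, _root_.fderiv ℝ (fun p : ℝ × (Fin m → ℝ) => p.1 ^ (k + 1) • F p) p (1, 0)
      = p.1 ^ k * (p.1 * _root_.fderiv ℝ F p (1, 0) + (k + 1) * F p) := by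
    intro p hp
    have hp : 0 < p.1 := hp.1
    have h1 : HasFDerivAt (fun p : ℝ × (Fin m → ℝ) => p.1 ^ (k + 1)) _ p :=
      (hasFDerivAt_fst (𝕜 := ℝ) (p := p)).rpow_const (Or.inl hp.ne')
    have h2 : HasFDerivAt (fun p : ℝ × (Fin m → ℝ) => p.1 ^ (k + 1) • F p) _ p :=
      h1.smul (hF.diff p).hasFDerivAt
    rw [h2.fderiv, Real.rpow_add_one hp.ne']
    simp
    ring
  constructor
  · exact ((hT.fderiv (1, 0)).integrable.integrableOn).congr_fun e measurableSet_HS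
  · rw [← setIntegral_congr_fun measurableSet_HS e,
      setIntegral_eq_integral_of_forall_compl_eq_zero, hT.integral_fderiv]
    intro p hp
    refine (hT.fderiv (1, 0)).eq_zero ?_
    intro h; exact hp ⟨h, trivial⟩

theorem Tst.zY {F : ℝ × (Fin m → ℝ) → ℝ} (hF : Tst F) (k : ℝ) (w : Fin m → ℝ) :
    Z k (fun p => _root_.fderiv ℝ F p (0, w)) := by
  have hT := hF.rpow k
  have e : ∀ p ∈ HS m, _root_.fderiv ℝ (fun p : ℝ × (Fin m → ℝ) => p.1 ^ k • F p) p (0, w)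
      = p.1 ^ k * _root_.fderiv ℝ F p (0, w) := by
    intro p hp
    have hp : 0 < p.1 := hp.1
    have h1 : HasFDerivAt (fun p : ℝ × (Fin m → ℝ) => p.1 ^ k) _ p :=
      (hasFDerivAt_fst (𝕜 := ℝ) (p := p)).rpow_const (Or.inl hp.ne')
    have h2 : HasFDerivAt (fun p : ℝ × (Fin m → ℝ) => p.1 ^ k • F p) _ p :=
      h1.smul (hF.diff p).hasFDerivAt
    rw [h2.fderiv]
    simp
  constructor
  · exact ((hT.fderiv (0, w)).integrable.integrableOn).congr_fun e measurableSet_HS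
  · rw [← setIntegral_congr_fun measurableSet_HS e,
      setIntegral_eq_integral_of_forall_compl_eq_zero, hT.integral_fderiv]
    intro p hp
    refine (hT.fderiv (0, w)).eq_zero ?_
    intro h; exact hp ⟨h, trivial⟩

end
section
variable {m : ℕ}

theorem Tst.pX {v : ℝ × (Fin m → ℝ) → ℂ} (hv : Tst v) : Tst (pderivX v) := hv.fderiv _
theorem Tst.pY {v : ℝ × (Fin m → ℝ) → ℂ} (hv : Tst v) (j : Fin m) : Tst (pderivY j v) :=
  hv.fderiv _

theorem contDiff_ofReal_fst :
    ContDiff ℝ (⊤ : ℕ∞) (fun p : ℝ × (Fin m → ℝ) => (p.1 : ℂ)) :=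
  Complex.ofRealCLM.contDiff.comp contDiff_fst

/-- multiplication by `x` -/
theorem Tst.xmul {v : ℝ × (Fin m → ℝ) → ℂ} (hv : Tst v) : Tst (fun p => (p.1 : ℂ) * v p) :=
  hv.of_zero (contDiff_ofReal_fst.mul hv.smooth) (fun p hp => by simp [hp])

theorem Tst.sumC {ι : Type*} (s : Finset ι) {h : ι → ℝ × (Fin m → ℝ) → ℂ}
    (H : ∀ i, Tst (h i)) : Tst (fun p => ∑ i ∈ s, h i p) := by
  classical
  induction s using Finset.induction_on with
  | empty =>
    refine ⟨by simpa using contDiff_const, ?_, ?_⟩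
    · simp only [Finset.sum_empty]
      exact HasCompactSupport.zero
    · simp [tsupport]
  | insert a s ha ih =>
    simp only [Finset.sum_insert ha]
    exact (H a).add ih

/-- `(x∂ₓ - s) v` -/
noncomputable def N (s : ℝ) (v : ℝ × (Fin m → ℝ) → ℂ) (p : ℝ × (Fin m → ℝ)) : ℂ :=
  (p.1 : ℂ) * pderivX v p + (-s : ℂ) * v p

theorem Tst.N {v : ℝ × (Fin m → ℝ) → ℂ} (hv : Tst v) (s : ℝ) : Tst (N s v) :=
  hv.pX.xmul.add (hv.csmul _)

/-- the operator in conjugated form -/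
noncomputable def Q (s ν : ℝ) (v : ℝ × (Fin m → ℝ) → ℂ) (p : ℝ × (Fin m → ℝ)) : ℂ :=
  (-1) * N s (N s v) p + (ν * v p + ∑ j, (p.1 : ℂ) * ((p.1 : ℂ) * pderivY j (pderivY j v) p))

theorem Tst.Q {v : ℝ × (Fin m → ℝ) → ℂ} (hv : Tst v) (s ν : ℝ) : Tst (Q s ν v) :=
  (((hv.N s).N s).csmul _).add ((hv.csmul _).add
    (Tst.sumC _ fun j => ((hv.pY j).pY j).xmul.xmul))

theorem hasFDerivAt_xmul {v : ℝ × (Fin m → ℝ) → ℂ} {v' : ℝ × (Fin m → ℝ) →L[ℝ] ℂ}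
    {p : ℝ × (Fin m → ℝ)} (hv : HasFDerivAt v v' p) (e : ℝ × (Fin m → ℝ)) :
    fderiv ℝ (fun p => (p.1 : ℂ) * v p) p e = (p.1 : ℂ) * v' e + (e.1 : ℂ) * v p := by
  have h1 : HasFDerivAt (fun p : ℝ × (Fin m → ℝ) => (p.1 : ℂ))
      (Complex.ofRealCLM.comp (ContinuousLinearMap.fst ℝ ℝ (Fin m → ℝ))) p :=
    Complex.ofRealCLM.hasFDerivAt.comp p hasFDerivAt_fst
  have h2 : HasFDerivAt (fun p : ℝ × (Fin m → ℝ) => (p.1 : ℂ) * v p) _ p := h1.mul hv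
  rw [h2.fderiv]
  simp
  ring

theorem fderiv_N {v : ℝ × (Fin m → ℝ) → ℂ} (hv : Tst v) (s : ℝ) (p e : ℝ × (Fin m → ℝ)) :
    fderiv ℝ (N s v) p e = (p.1 : ℂ) * fderiv ℝ (pderivX v) p e + (e.1 : ℂ) * pderivX v p
      + (-s : ℂ) * fderiv ℝ v p e := by
  have h1 : fderiv ℝ (N s v) p = fderiv ℝ (fun p => (p.1 : ℂ) * pderivX v p) p
      + fderiv ℝ (fun p => (-s : ℂ) * v p) p :=
    fderiv_fun_add (hv.pX.xmul.diff p) ((hv.csmul _).diff p)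
  have h2 : fderiv ℝ (fun p => (-s : ℂ) * v p) p = (-s : ℂ) • fderiv ℝ v p :=
    fderiv_const_mul (hv.diff p) _
  rw [h1, h2, add_apply, hasFDerivAt_xmul (hv.pX.diff p).hasFDerivAt]
  simp

theorem symm_XY {v : ℝ × (Fin m → ℝ) → ℂ} (hv : Tst v) (p e e' : ℝ × (Fin m → ℝ)) :
    fderiv ℝ (fun q => fderiv ℝ v q e) p e' = fderiv ℝ (fun q => fderiv ℝ v q e') p e := by
  have hs : IsSymmSndFDerivAt ℝ v p :=
    hv.smooth.contDiffAt.isSymmSndFDerivAt (by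
      simp only [minSmoothness_of_isRCLikeNormedField]; exact WithTop.coe_le_coe.2 le_top)
  have hd : DifferentiableAt ℝ (fderiv ℝ v) p :=
    ((hv.smooth.fderiv_right (m := (⊤ : ℕ∞)) (by simp)).differentiable (by simp)) p
  have h : ∀ e e', fderiv ℝ (fun q => fderiv ℝ v q e) p e' = fderiv ℝ (fderiv ℝ v) p e' e := by
    intro e e'
    rw [fderiv_clm_apply hd (differentiableAt_const _)]
    simp
  rw [h, h]
  exact hs _ _

theorem Pmodel_eq (n : ℕ) (lam : ℝ) {v : ℝ × (Fin (n - 1) → ℝ) → ℂ} (hv : Tst v) :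
    Pmodel n (lam : ℂ) v = Q (((n : ℝ) - 1) / 2) ((((n : ℝ) - 1) / 2) ^ 2 - lam) v := by
  ext p
  unfold Pmodel Q lapY
  have hN : pderivX (N (((n : ℝ) - 1) / 2) v) p = _ := fderiv_N hv _ p (1, 0)
  rw [N, hN, pderivX, hasFDerivAt_xmul (hv.pX.diff p).hasFDerivAt]
  rw [← Finset.mul_sum, ← Finset.mul_sum]
  simp only [N]
  simp only [pderivX]
  push_cast
  ring
end
section
variable {m : ℕ}

theorem divX {a b : ℝ × (Fin m → ℝ) → ℂ} (ha : Tst a) (hb : Tst b) (l s k : ℝ)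
    (hk : k + 1 = 2 * l - 2 * s) :
    Z k (fun p => 2 * l * inner ℝ (a p) (b p) + inner ℝ (N s a p) (b p)
      + inner ℝ (a p) (N s b p)) := by
  have h := (ha.inner hb).zX k
  convert h using 2 with p
  rw [fderiv_inner_apply ℝ (ha.diff p) (hb.diff p), hk]
  simp only [N, pderivX, Complex.inner]
  simp
  ring

theorem divY {a b : ℝ × (Fin m → ℝ) → ℂ} (ha : Tst a) (hb : Tst b) (k : ℝ) (j : Fin m) :
    Z k (fun p => inner ℝ (pderivY j a p) (b p) + inner ℝ (a p) (pderivY j b p)) := by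
  have h := (ha.inner hb).zY k (Pi.single j 1)
  convert h using 2 with p
  rw [fderiv_inner_apply ℝ (ha.diff p) (hb.diff p), add_comm]
  rfl

theorem pderivY_xmul {v : ℝ × (Fin m → ℝ) → ℂ} (hv : Tst v) (j : Fin m)
    (p : ℝ × (Fin m → ℝ)) :
    pderivY j (fun p => (p.1 : ℂ) * v p) p = (p.1 : ℂ) * pderivY j v p := by
  rw [pderivY, hasFDerivAt_xmul (hv.diff p).hasFDerivAt]
  simp [pderivY]

theorem N_q {v : ℝ × (Fin m → ℝ) → ℂ} (hv : Tst v) (s : ℝ) (j : Fin m)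
    (p : ℝ × (Fin m → ℝ)) :
    N s (fun p => (p.1 : ℂ) * pderivY j v p) p
      = (p.1 : ℂ) * pderivY j v p + (p.1 : ℂ) * pderivY j (N s v) p := by
  have h1 : pderivY j (N s v) p = _ := fderiv_N hv s p (0, Pi.single j 1)
  have h2 := symm_XY hv p (1, 0) (0, Pi.single j 1)
  rw [h1, N, pderivX, hasFDerivAt_xmul ((hv.pY j).diff p).hasFDerivAt]
  simp only [pderivX, pderivY] at h2 ⊢
  rw [show fderiv ℝ (pderivX v) p (0, Pi.single j 1) = _ from h2]
  simp
  rw [show fderiv ℝ (pderivY j v) p = fderiv ℝ (fun q => fderiv ℝ v q (0, Pi.single j 1)) p from rfl]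
  ring

/-- the total divergence -/
theorem divTotal {v : ℝ × (Fin m → ℝ) → ℂ} (hv : Tst v) (l s k : ℝ)
    (hk : k + 1 = 2 * l - 2 * s) (α β e1 e2 e3 : ℝ) :
    Z k (fun p =>
      e1 * (2 * l * ‖N s v p‖ ^ 2 + 2 * inner ℝ (N s (N s v) p) (N s v p))
      + e2 * (2 * l * ‖v p‖ ^ 2 + 2 * inner ℝ (N s v p) (v p))
      + e3 * (2 * l * inner ℝ (N s v p) (v p) + inner ℝ (N s (N s v) p) (v p) + ‖N s v p‖ ^ 2)
      + (α * inner ℝ (∑ j, (p.1 : ℂ) * ((p.1 : ℂ) * pderivY j (pderivY j v) p)) (N s v p)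
        + β * inner ℝ (∑ j, (p.1 : ℂ) * ((p.1 : ℂ) * pderivY j (pderivY j v) p)) (v p)
        + (β - α * (l + 1)) * ∑ j, ‖(p.1 : ℂ) * pderivY j v p‖ ^ 2)) := by
  have hz := hv.N s
  have D1 := (divX hz hz l s k hk).smul e1
  have D2 := (divX hv hv l s k hk).smul e2
  have D3 := (divX hz hv l s k hk).smul e3
  have D4 := fun j => (divX (hv.pY j).xmul (hv.pY j).xmul l s k hk).smul (-α / 2)
  have D5 := fun j => (divY (hv.pY j).xmul.xmul hz k j).smul α
  have D6 := fun j => (divY (hv.pY j).xmul.xmul hv k j).smul β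
  have D := ((D1.add D2).add D3).add
    (Z.sum Finset.univ fun j => ((D4 j).add (D5 j)).add (D6 j))
  convert D using 2 with p
  congr 1
  · simp only [Complex.inner, Complex.sq_norm, Complex.normSq_apply]
    simp
    ring
  · rw [sum_inner, sum_inner, Finset.mul_sum, Finset.mul_sum, Finset.mul_sum,
      ← Finset.sum_add_distrib, ← Finset.sum_add_distrib]
    refine Finset.sum_congr rfl fun j _ => ?_
    rw [N_q hv, pderivY_xmul (hv.pY j).xmul, pderivY_xmul (hv.pY j)]
    simp only [Complex.inner, Complex.sq_norm, Complex.normSq_apply]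
    simp
    ring

theorem young {ε κ α β : ℝ} (hε : 0 < ε) (hκ : 0 < κ) (g z v : ℂ) :
    α * inner ℝ g z + β * inner ℝ g v ≤ ε * ‖z‖ ^ 2 + κ / 2 * ‖v‖ ^ 2
      + (α ^ 2 / (4 * ε) + β ^ 2 / (2 * κ)) * ‖g‖ ^ 2 := by
  have h1 : ∀ (δ a : ℝ) (w : ℂ), 0 < δ →
      a * inner ℝ g w ≤ δ * ‖w‖ ^ 2 + a ^ 2 / (4 * δ) * ‖g‖ ^ 2 := by
    intro δ a w hδ
    have h := real_inner_le_norm (a • g) w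
    rw [inner_smul_left, norm_smul] at h
    simp only [conj_trivial, Real.norm_eq_abs] at h
    refine h.trans ?_
    have h2 : δ * ‖w‖ ^ 2 + a ^ 2 / (4 * δ) * ‖g‖ ^ 2 - |a| * ‖g‖ * ‖w‖
        = δ * (‖w‖ - |a| * ‖g‖ / (2 * δ)) ^ 2 := by
      rw [← sq_abs a]
      field_simp
      ring
    have h3 : 0 ≤ δ * (‖w‖ - |a| * ‖g‖ / (2 * δ)) ^ 2 := by positivity
    linarith
  have h2 := h1 ε α z hε
  have h3 := h1 (κ / 2) β v (by linarith)
  have : 4 * (κ / 2) = 2 * κ := by ring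
  rw [this] at h3
  linarith

theorem estimate {l s k ν α β : ℝ} (hk : k + 1 = 2 * l - 2 * s)
    (ha : 0 < α * l + β) (hγ : 0 ≤ α * (l + 1) - β)
    (hκ : 0 < (-α * l * ν + β * (ν - 2 * l ^ 2)) + (α * l + β) * l ^ 2) :
    ∃ C : ℝ, 0 ≤ C ∧ ∀ v : ℝ × (Fin m → ℝ) → ℂ, Tst v →
      ∫ p in HS m, p.1 ^ k * ‖v p‖ ^ 2 ≤ C * ∫ p in HS m, p.1 ^ k * ‖Q s ν v p‖ ^ 2 := by
  set a := α * l + β with ha_def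
  set b := -α * l * ν + β * (ν - 2 * l ^ 2) with hb_def
  obtain ⟨ε, hε, hεa, hεκ⟩ : ∃ ε : ℝ, 0 < ε ∧ ε ≤ a ∧ 0 < b + (a - ε) * l ^ 2 := by
    refine ⟨min a ((b + a * l ^ 2) / (2 * (l ^ 2 + 1))), by positivity, min_le_left _ _, ?_⟩
    have h := min_le_right a ((b + a * l ^ 2) / (2 * (l ^ 2 + 1)))
    set ε := min a ((b + a * l ^ 2) / (2 * (l ^ 2 + 1)))
    rw [le_div_iff₀ (by positivity)] at h
    have : 0 < ε := by positivity
    nlinarith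
  set κ := b + (a - ε) * l ^ 2 with hκ_def
  set C₀ := α ^ 2 / (4 * ε) + β ^ 2 / (2 * κ) with hC₀
  have hC₀' : 0 ≤ C₀ := by positivity
  refine ⟨2 / κ * C₀, by positivity, fun v hv => ?_⟩
  have hint : ∀ w : ℝ × (Fin m → ℝ) → ℂ, Tst w →
      IntegrableOn (fun p => p.1 ^ k * ‖w p‖ ^ 2) (HS m) := by
    intro w hw
    have := ((hw.inner hw).rpow k).integrable.integrableOn (s := HS m)
    simpa only [real_inner_self_eq_norm_sq, smul_eq_mul] using this
  -- the divergence
  obtain ⟨E, hE, hD⟩ : ∃ E : ℝ × (Fin m → ℝ) → ℝ, E = _ ∧ Z k E :=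
    ⟨_, rfl, divTotal hv l s k hk (-α) (-β) (α / 2)
      (-(α * ν / 2 + β * l) + (a - ε) * l) β⟩
  have key : ∀ p ∈ HS m, κ / 2 * (p.1 ^ k * ‖v p‖ ^ 2) ≤ C₀ * (p.1 ^ k * ‖Q s ν v p‖ ^ 2)
      + p.1 ^ k * E p := by
    intro p hp
    have hx : 0 ≤ p.1 ^ k := Real.rpow_nonneg (le_of_lt hp.1) _
    have hpt := young (α := α) (β := β) hε hεκ (Q s ν v p) (N s v p) (v p)
    have hG : 0 ≤ (α * (l + 1) - β) * ∑ j, ‖(p.1 : ℂ) * pderivY j v p‖ ^ 2 := by positivity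
    have hH : 0 ≤ (a - ε) * ‖N s v p + l * v p‖ ^ 2 :=
      mul_nonneg (by linarith) (by positivity)
    have h0 : κ / 2 * ‖v p‖ ^ 2 ≤ C₀ * ‖Q s ν v p‖ ^ 2 + E p := by
      refine le_of_sub_nonneg (le_trans (add_nonneg (add_nonneg hG hH) (sub_nonneg.2 hpt))
        (le_of_eq ?_))
      have e1 : inner ℝ (Q s ν v p) (N s v p) = - inner ℝ (N s (N s v) p) (N s v p)
          + ν * inner ℝ (N s v p) (v p)
          + inner ℝ (∑ j, (p.1 : ℂ) * ((p.1 : ℂ) * pderivY j (pderivY j v) p)) (N s v p) := by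
        rw [Q]
        generalize (∑ j, (p.1 : ℂ) * ((p.1 : ℂ) * pderivY j (pderivY j v) p)) = R
        simp only [Complex.inner]
        simp
        ring
      have e2 : inner ℝ (Q s ν v p) (v p) = - inner ℝ (N s (N s v) p) (v p)
          + ν * ‖v p‖ ^ 2
          + inner ℝ (∑ j, (p.1 : ℂ) * ((p.1 : ℂ) * pderivY j (pderivY j v) p)) (v p) := by
        rw [Q]
        generalize (∑ j, (p.1 : ℂ) * ((p.1 : ℂ) * pderivY j (pderivY j v) p)) = R
        simp only [Complex.inner, Complex.sq_norm, Complex.normSq_apply]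
        simp
        ring
      have e3 : ‖N s v p + l * v p‖ ^ 2 = ‖N s v p‖ ^ 2 + 2 * l * inner ℝ (N s v p) (v p)
          + l ^ 2 * ‖v p‖ ^ 2 := by
        simp only [Complex.inner, Complex.sq_norm, Complex.normSq_apply]
        simp
        ring
      rw [e1, e2, e3, hE, hκ_def, hb_def, ha_def]
      ring
    calc κ / 2 * (p.1 ^ k * ‖v p‖ ^ 2) = p.1 ^ k * (κ / 2 * ‖v p‖ ^ 2) := by ring
      _ ≤ p.1 ^ k * (C₀ * ‖Q s ν v p‖ ^ 2 + E p) := mul_le_mul_of_nonneg_left h0 hx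
      _ = _ := by ring
  have hI := setIntegral_mono_on ((hint v hv).const_mul (κ / 2))
    (((hint _ (hv.Q s ν)).const_mul C₀).add hD.int) measurableSet_HS key
  have hI2 : ∫ p in HS m, (C₀ * (p.1 ^ k * ‖Q s ν v p‖ ^ 2) + p.1 ^ k * E p)
      = C₀ * ∫ p in HS m, p.1 ^ k * ‖Q s ν v p‖ ^ 2 := by
    rw [integral_add ((hint _ (hv.Q s ν)).const_mul C₀) hD.int, hD.zero, integral_const_mul,
      add_zero]
  simp only [Pi.add_apply] at hI
  rw [hI2, integral_const_mul] at hI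
  calc ∫ p in HS m, p.1 ^ k * ‖v p‖ ^ 2
      = 2 / κ * (κ / 2 * ∫ p in HS m, p.1 ^ k * ‖v p‖ ^ 2) := by field_simp
    _ ≤ 2 / κ * (C₀ * ∫ p in HS m, p.1 ^ k * ‖Q s ν v p‖ ^ 2) :=
        mul_le_mul_of_nonneg_left hI (by positivity)
    _ = _ := by ring

theorem params {l lΛ ν : ℝ} (h : lΛ = Real.sqrt (max ν 0))
    (hl : l < -max (1 / 2) lΛ ∨ (-min (1 / 2) lΛ < l ∧ l ≠ lΛ)) :
    ∃ α β : ℝ, 0 < α * l + β ∧ 0 ≤ α * (l + 1) - β ∧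
      0 < (-α * l * ν + β * (ν - 2 * l ^ 2)) + (α * l + β) * l ^ 2 := by
  have h0 : 0 ≤ lΛ := h ▸ Real.sqrt_nonneg _
  have hsq : lΛ ^ 2 = max ν 0 := by rw [h, Real.sq_sqrt (le_max_right _ _)]
  have hν : ν ≤ lΛ ^ 2 := hsq ▸ le_max_left _ _
  have hν' : 0 < lΛ → ν = lΛ ^ 2 := by
    intro hp
    rcases le_total ν 0 with h1 | h1
    · rw [max_eq_right h1] at hsq
      nlinarith
    · rw [hsq, max_eq_left h1]
  rcases hl with hl | ⟨hl, hne⟩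
  · have h1 : l < -(1 / 2) := lt_of_lt_of_le hl (neg_le_neg (le_max_left _ _))
    have h2 : l < -lΛ := lt_of_lt_of_le hl (neg_le_neg (le_max_right _ _))
    refine ⟨-1, -1 / 2, by linarith, by linarith, ?_⟩
    have h3 : 0 < l ^ 2 - ν := by nlinarith
    have h4 : 0 < -l + 1 / 2 := by linarith
    nlinarith [mul_pos h3 h4]
  · have h1 : -(1 / 2) < l := lt_of_le_of_lt (neg_le_neg (min_le_left _ _)) hl
    have h2 : -lΛ < l := lt_of_le_of_lt (neg_le_neg (min_le_right _ _)) hl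
    rcases lt_or_gt_of_ne hne with h3 | h3
    · have hp : 0 < lΛ := by linarith
      refine ⟨1, l + 1 , by linarith, by linarith, ?_⟩
      rw [hν' hp]
      have h4 : 0 < lΛ ^ 2 - l ^ 2 := by nlinarith
      nlinarith
    · refine ⟨1, 0, by linarith, by linarith, ?_⟩
      have h4 : 0 < l ^ 2 - ν := by nlinarith
      have h5 : 0 < l := by linarith
      nlinarith [mul_pos h4 h5]
end
theorem duality {V H : Type*} [AddCommGroup V] [Module ℂ V] [NormedAddCommGroup H]
    [InnerProductSpace ℂ H] [CompleteSpace H] (A B : V →ₗ[ℂ] H) (C : ℝ)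
    (h : ∀ v, ‖B v‖ ≤ C * ‖A v‖) (F : H) :
    ∃ U : H, ∀ v, inner ℂ (A v) U = inner ℂ (B v) F := by
  let φ : V →ₗ[ℂ] ℂ := (innerSL ℂ F).toLinearMap.comp B
  have hφ : ∀ v, φ v = inner ℂ F (B v) := fun v => rfl
  have hker : LinearMap.ker A ≤ LinearMap.ker φ := by
    intro v hv
    rw [LinearMap.mem_ker] at hv ⊢
    have := h v
    rw [hv, norm_zero, mul_zero] at this
    rw [hφ, norm_le_zero_iff.1 this, inner_zero_right]
  let ψ : LinearMap.range A →ₗ[ℂ] ℂ :=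
    ((LinearMap.ker A).liftQ φ hker).comp A.quotKerEquivRange.symm.toLinearMap
  have hψ : ∀ v, ψ ⟨A v, LinearMap.mem_range_self A v⟩ = φ v := by
    intro v
    have : A.quotKerEquivRange.symm ⟨A v, LinearMap.mem_range_self A v⟩
        = (LinearMap.ker A).mkQ v := by
      rw [LinearEquiv.symm_apply_eq]
      rfl
    simp only [ψ, LinearMap.comp_apply, LinearEquiv.coe_coe]
    rw [this]
    simp
  let Ψ : StrongDual ℂ (LinearMap.range A) := ψ.mkContinuous (‖F‖ * C) (by
    rintro ⟨_, v, rfl⟩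
    rw [hψ, hφ]
    calc ‖inner ℂ F (B v)‖ ≤ ‖F‖ * ‖B v‖ := norm_inner_le_norm _ _
      _ ≤ ‖F‖ * (C * ‖A v‖) := mul_le_mul_of_nonneg_left (h v) (norm_nonneg _)
      _ = _ := by simp; ring)
  obtain ⟨g, hg, -⟩ := exists_extension_norm_eq (LinearMap.range A) Ψ
  refine ⟨(InnerProductSpace.toDual ℂ H).symm g, fun v => ?_⟩
  rw [← inner_conj_symm, InnerProductSpace.toDual_symm_apply,
    hg ⟨A v, LinearMap.mem_range_self A v⟩]
  have : Ψ ⟨A v, LinearMap.mem_range_self A v⟩ = inner ℂ F (B v) := hψ v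
  rw [this, inner_conj_symm]

section
variable {m : ℕ}

theorem Tst.memLp {F : ℝ × (Fin m → ℝ) → ℂ} (hF : Tst F) :
    MemLp F 2 (volume.restrict (HS m)) :=
  (hF.smooth.continuous.memLp_of_hasCompactSupport hF.cpt).restrict _

theorem inner_toLp {μ : Measure (ℝ × (Fin m → ℝ))} {F G : ℝ × (Fin m → ℝ) → ℂ}
    (hF : MemLp F 2 μ) (hG : MemLp G 2 μ) :
    inner ℂ (hF.toLp F) (hG.toLp G) = ∫ p, G p * (starRingEnd ℂ) (F p) ∂μ := by
  rw [L2.inner_def]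
  refine integral_congr_ae ?_
  filter_upwards [hF.coeFn_toLp, hG.coeFn_toLp] with p h1 h2
  rw [h1, h2]
  simp

theorem norm_sq_toLp {μ : Measure (ℝ × (Fin m → ℝ))} {F : ℝ × (Fin m → ℝ) → ℂ}
    (hF : MemLp F 2 μ) : ‖hF.toLp F‖ ^ 2 = ∫ p, ‖F p‖ ^ 2 ∂μ := by
  have h := inner_self_eq_norm_sq_to_K (𝕜 := ℂ) (hF.toLp F)
  rw [inner_toLp] at h
  have h2 : ∫ p, F p * (starRingEnd ℂ) (F p) ∂μ = ((∫ p, ‖F p‖ ^ 2 ∂μ : ℝ) : ℂ) := by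
    rw [← integral_complex_ofReal]
    congr 1
    ext p
    rw [Complex.mul_conj, Complex.normSq_eq_norm_sq]
  rw [h2] at h
  apply Complex.ofReal_injective
  rw [h]
  push_cast
  rfl

/-- The space of test functions. -/
def TS (m : ℕ) : Submodule ℂ (ℝ × (Fin m → ℝ) → ℂ) where
  carrier := {v | Tst v}
  add_mem' h h' := Tst.add h h'
  zero_mem' := ⟨contDiff_const, HasCompactSupport.zero, by simp [tsupport]⟩
  smul_mem' c _ h := Tst.csmul h c

theorem TS.tst (v : TS m) : Tst (v : ℝ × (Fin m → ℝ) → ℂ) := v.2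

theorem pd_add {v w : ℝ × (Fin m → ℝ) → ℂ} (hv : Tst v) (hw : Tst w)
    (p e : ℝ × (Fin m → ℝ)) :
    fderiv ℝ (v + w) p e = fderiv ℝ v p e + fderiv ℝ w p e := by
  rw [fderiv_add (hv.diff p) (hw.diff p)]; rfl

theorem pd_smul {v : ℝ × (Fin m → ℝ) → ℂ} (hv : Tst v) (c : ℂ)
    (p e : ℝ × (Fin m → ℝ)) :
    fderiv ℝ (c • v) p e = c * fderiv ℝ v p e := by
  rw [fderiv_const_smul (hv.diff p)]; rfl

theorem N_add {v w : ℝ × (Fin m → ℝ) → ℂ} (hv : Tst v) (hw : Tst w) (s : ℝ) :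
    N s (v + w) = N s v + N s w := by
  ext p
  simp only [N, pderivX, pd_add hv hw, Pi.add_apply]
  ring

theorem N_smul {v : ℝ × (Fin m → ℝ) → ℂ} (hv : Tst v) (c : ℂ) (s : ℝ) :
    N s (c • v) = c • N s v := by
  ext p
  simp only [N, pderivX, pd_smul hv, Pi.smul_apply, smul_eq_mul]
  ring

theorem pY_add {v w : ℝ × (Fin m → ℝ) → ℂ} (hv : Tst v) (hw : Tst w) (j : Fin m) :
    pderivY j (v + w) = pderivY j v + pderivY j w := by
  ext p
  simp only [pderivY, pd_add hv hw, Pi.add_apply]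

theorem pY_smul {v : ℝ × (Fin m → ℝ) → ℂ} (hv : Tst v) (c : ℂ) (j : Fin m) :
    pderivY j (c • v) = c • pderivY j v := by
  ext p
  simp only [pderivY, pd_smul hv, Pi.smul_apply, smul_eq_mul]

theorem Q_add {v w : ℝ × (Fin m → ℝ) → ℂ} (hv : Tst v) (hw : Tst w) (s ν : ℝ) :
    Q s ν (v + w) = Q s ν v + Q s ν w := by
  ext p
  simp only [Q, Pi.add_apply, N_add hv hw, N_add (hv.N s) (hw.N s), pY_add hv hw,
    pY_add (hv.pY _) (hw.pY _), mul_add, Finset.sum_add_distrib]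
  ring

theorem Q_smul {v : ℝ × (Fin m → ℝ) → ℂ} (hv : Tst v) (c : ℂ) (s ν : ℝ) :
    Q s ν (c • v) = c • Q s ν v := by
  ext p
  simp only [Q, Pi.smul_apply, N_smul hv, N_smul (hv.N s), pY_smul hv,
    pY_smul (hv.pY _), smul_eq_mul, mul_add, Finset.mul_sum]
  congr 1
  · ring
  · congr 1
    · ring
    · refine Finset.sum_congr rfl fun j _ => ?_
      ring

/-- `v ↦ x^r v` -/
noncomputable def Bmap (m : ℕ) (r : ℝ) : TS m →ₗ[ℂ] Lp ℂ 2 (volume.restrict (HS m)) where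
  toFun v := (((TS.tst v).rpow r).memLp).toLp _
  map_add' v w := by
    rw [← MemLp.toLp_add]
    congr 1
    ext p
    simp
  map_smul' c v := by
    rw [RingHom.id_apply, ← MemLp.toLp_const_smul]
    congr 1
    ext p
    simp
    ring

/-- `v ↦ Q v` -/
noncomputable def Qmap (m : ℕ) (s ν : ℝ) : TS m →ₗ[ℂ] TS m where
  toFun v := ⟨Q s ν v, (TS.tst v).Q s ν⟩
  map_add' v w := by
    ext1; exact Q_add (TS.tst v) (TS.tst w) s ν
  map_smul' c v := by
    ext1; exact Q_smul (TS.tst v) c s ν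

theorem norm_sq_Bmap (r : ℝ) (v : TS m) :
    ‖Bmap m r v‖ ^ 2 = ∫ p in HS m, p.1 ^ (2 * r) * ‖(v : ℝ × (Fin m → ℝ) → ℂ) p‖ ^ 2 := by
  have : ‖Bmap m r v‖ ^ 2 = _ := norm_sq_toLp (((TS.tst v).rpow r).memLp)
  rw [this]
  refine setIntegral_congr_fun measurableSet_HS fun p hp => ?_
  have hp : 0 < p.1 := hp.1
  simp only [norm_smul, Real.norm_eq_abs, abs_of_pos (Real.rpow_pos_of_pos hp r)]
  rw [mul_pow, two_mul, Real.rpow_add hp, sq]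

theorem sq_weight {x : ℝ} (hx : 0 < x) (r t : ℝ) (h : t = 2 * r) (w : ℂ) :
    ‖x ^ r • w‖ ^ 2 = x ^ t * ‖w‖ ^ 2 := by
  rw [norm_smul, Real.norm_eq_abs, abs_of_pos (Real.rpow_pos_of_pos hx r), mul_pow, h, two_mul,
    Real.rpow_add hx, sq]

end
end KG
/-- weighted `L²` solvability of `P u = f` in the distributional sense:
if `l < −max(1/2, l(λ))`, or `l > −min(1/2, l(λ))` and `l ≠ l(λ)`, then for every
measurable `f` with `∫∫ x^{−2l−n} |f|² < ∞` there is a measurable `u` with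
`∫∫ x^{−2l−n} |u|² < ∞` such that `∫∫ u · conj(P v) · x^{−n} = ∫∫ f · conj(v) · x^{−n}`
for all smooth compactly supported test functions `v` on `(0,∞) × ℝ^{n−1}`. -/
theorem stmt6 (n : ℕ) (hn : 2 ≤ n) (lam : ℝ) (lΛ : ℝ)
    (hlΛ : lΛ = Real.sqrt (max (((((n : ℝ) - 1) / 2) ^ 2) - lam) 0))
    (l : ℝ)
    (hl : l < -max (1 / 2) lΛ ∨ (-min (1 / 2) lΛ < l ∧ l ≠ lΛ))
    (f : ℝ × (Fin (n - 1) → ℝ) → ℂ) (hf : Measurable f)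
    (hfL2 : ∫⁻ p in Set.Ioi (0 : ℝ) ×ˢ (Set.univ : Set (Fin (n - 1) → ℝ)),
        ENNReal.ofReal (p.1 ^ (-2 * l - (n : ℝ)) * ‖f p‖ ^ 2) < ⊤) :
    ∃ u : ℝ × (Fin (n - 1) → ℝ) → ℂ, Measurable u ∧
      (∫⁻ p in Set.Ioi (0 : ℝ) ×ˢ (Set.univ : Set (Fin (n - 1) → ℝ)),
          ENNReal.ofReal (p.1 ^ (-2 * l - (n : ℝ)) * ‖u p‖ ^ 2) < ⊤) ∧
      ∀ v : ℝ × (Fin (n - 1) → ℝ) → ℂ,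
        ContDiff ℝ (⊤ : ℕ∞) v → HasCompactSupport v →
        tsupport v ⊆ {p : ℝ × (Fin (n - 1) → ℝ) | 0 < p.1} →
        (∫ p in Set.Ioi (0 : ℝ) ×ˢ (Set.univ : Set (Fin (n - 1) → ℝ)),
            u p * (starRingEnd ℂ) (Pmodel n (lam : ℂ) v p) * ((p.1 ^ (-(n : ℝ)) : ℝ) : ℂ))
          = ∫ p in Set.Ioi (0 : ℝ) ×ˢ (Set.univ : Set (Fin (n - 1) → ℝ)),
              f p * (starRingEnd ℂ) (v p) * ((p.1 ^ (-(n : ℝ)) : ℝ) : ℂ) := by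
  have hk : (2 * l - (n : ℝ)) + 1 = 2 * l - 2 * (((n : ℝ) - 1) / 2) := by ring
  obtain ⟨α, β, ha, hγ, hκ⟩ := KG.params hlΛ hl
  obtain ⟨C, hC, hest⟩ := KG.estimate (m := n - 1) hk ha hγ hκ
  set s : ℝ := ((n : ℝ) - 1) / 2 with hs
  set ν : ℝ := s ^ 2 - lam with hν
  set r : ℝ := l - n / 2 with hr
  have hb : ∀ v, ‖KG.Bmap (n - 1) r v‖
      ≤ Real.sqrt C * ‖((KG.Bmap (n - 1) r).comp (KG.Qmap (n - 1) s ν)) v‖ := by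
    intro v
    have h := hest v (KG.TS.tst v)
    rw [show 2 * l - (n : ℝ) = 2 * r by rw [hr]; ring] at h
    have h2 : ‖KG.Bmap (n - 1) r v‖ ^ 2
        ≤ C * ‖((KG.Bmap (n - 1) r).comp (KG.Qmap (n - 1) s ν)) v‖ ^ 2 := by
      rw [LinearMap.comp_apply, KG.norm_sq_Bmap, KG.norm_sq_Bmap]
      exact h
    refine (sq_le_sq₀ (norm_nonneg _) (by positivity)).1 ?_
    rwa [mul_pow, Real.sq_sqrt hC]
  have hF : MemLp (fun p : ℝ × (Fin (n - 1) → ℝ) => p.1 ^ (-l - (n : ℝ) / 2) • f p) 2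
      (volume.restrict (KG.HS (n - 1))) := by
    have hm : Measurable (fun p : ℝ × (Fin (n - 1) → ℝ) => p.1 ^ (-l - (n : ℝ) / 2) • f p) :=
      (measurable_fst.pow_const _).smul hf
    rw [memLp_two_iff_integrable_sq_norm hm.aestronglyMeasurable]
    refine ⟨(hm.norm.pow_const 2).aestronglyMeasurable, ?_⟩
    rw [hasFiniteIntegral_iff_ofReal (Filter.Eventually.of_forall fun p => by positivity)]
    refine lt_of_le_of_lt (le_of_eq ?_) hfL2
    refine setLIntegral_congr_fun KG.measurableSet_HS fun p hp => ?_
    rw [KG.sq_weight hp.1 _ (-2 * l - (n : ℝ)) (by ring)]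
  obtain ⟨U, hU⟩ := KG.duality _ _ _ hb (hF.toLp _)
  have hUm : MemLp U 2 (volume.restrict (KG.HS (n - 1))) := Lp.memLp U
  have hUmeas : Measurable U := (Lp.stronglyMeasurable U).measurable
  refine ⟨fun p => p.1 ^ (l + (n : ℝ) / 2) • U p, (measurable_fst.pow_const _).smul hUmeas, ?_, ?_⟩
  · have h := (memLp_two_iff_integrable_sq_norm hUm.1).1 hUm
    have h2 := h.2
    rw [hasFiniteIntegral_iff_ofReal (Filter.Eventually.of_forall fun p => by positivity)] at h2
    refine lt_of_le_of_lt (le_of_eq ?_) h2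
    refine setLIntegral_congr_fun KG.measurableSet_HS fun p hp => ?_
    have hp : 0 < p.1 := hp.1
    simp only
    rw [KG.sq_weight hp _ (2 * l + (n : ℝ)) (by ring), ← mul_assoc, ← Real.rpow_add hp]
    simp
  · intro v h1 h2 h3
    have hv : KG.Tst v := ⟨h1, h2, h3⟩
    have h := hU ⟨v, hv⟩
    have hA : ((KG.Bmap (n - 1) r).comp (KG.Qmap (n - 1) s ν)) ⟨v, hv⟩
        = (((hv.Q s ν).rpow r).memLp).toLp _ := rfl
    have hB : KG.Bmap (n - 1) r ⟨v, hv⟩ = ((hv.rpow r).memLp).toLp _ := rfl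
    rw [hA, hB, KG.inner_toLp, ← Lp.toLp_coeFn U hUm, KG.inner_toLp] at h
    rw [KG.Pmodel_eq n lam hv, ← hs, ← hν]
    refine Eq.trans ?_ (h.trans ?_)
    · refine setIntegral_congr_fun KG.measurableSet_HS fun p hp => ?_
      have hp : 0 < p.1 := hp.1
      have e : p.1 ^ r = p.1 ^ (l + (n : ℝ) / 2) * p.1 ^ (-(n : ℝ)) := by
        rw [← Real.rpow_add hp]; congr 1; rw [hr]; ring
      simp only [Complex.real_smul, map_mul, Complex.conj_ofReal]
      rw [e]
      push_cast
      ring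
    · refine setIntegral_congr_fun KG.measurableSet_HS fun p hp => ?_
      have hp : 0 < p.1 := hp.1
      have e : p.1 ^ (-(n : ℝ)) = p.1 ^ (-l - (n : ℝ) / 2) * p.1 ^ r := by
        rw [← Real.rpow_add hp]; congr 1; rw [hr]; ring
      simp only [Complex.real_smul, map_mul, Complex.conj_ofReal]
      rw [e]
      push_cast
      ring
end

section
/- Let n ≥ 2 be an integer, s ∈ ℂ with Re s > −1, and φ : ℝ^{n−1} → ℂ smooth with compact support. Define v(x,y) = ∫_{{|Y| ≤ 1}} (1 − |Y|²)^s φ(y − xY) dY. Then: (i) v is smooth on ℝ × ℝ^{n−1}; (ii) for every x > 0 and y, v(x,y) = x^{−(n−1)} ∫_{ℝ^{n−1}} g_s(1 − |y−y′|²/x²) φ(y′) dy′, where g_s(t) = t^s for t > 0 and g_s(t) = 0 for t ≤ 0; (iii) v(0,y) = (π^{(n−1)/2} Γ(s+1)/Γ(s+(n+1)/2)) · φ(y) for every y. -/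
open MeasureTheory

/-- The truncated power `t₊ˢ`. -/
noncomputable def gs (s : ℂ) (t : ℝ) : ℂ := if 0 < t then (t : ℂ) ^ s else 0

lemma gs_beta_integrable (m : ℕ) (hm : 1 ≤ m) (s : ℂ) (hs : -1 < s.re) :
    IntegrableOn (fun t : ℝ => (t : ℂ) ^ ((m : ℂ) / 2 - 1) * gs s (1 - t)) (Set.Ioi 0) ∧
    ∫ t in Set.Ioi (0 : ℝ), (t : ℂ) ^ ((m : ℂ) / 2 - 1) * gs s (1 - t)
      = Complex.betaIntegral ((m : ℂ) / 2) (s + 1) := by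
  have hu : 0 < ((m : ℂ) / 2).re := by
    have : ((m : ℂ) / 2).re = (m : ℝ) / 2 := by
      rw [show ((m : ℂ) / 2) = (((m : ℝ) / 2 : ℝ) : ℂ) by push_cast; rfl, Complex.ofReal_re]
    rw [this]
    have : (1 : ℝ) ≤ m := by exact_mod_cast hm
    linarith
  have hv : 0 < (s + 1).re := by simp; linarith
  have hc := Complex.betaIntegral_convergent hu hv
  rw [intervalIntegrable_iff_integrableOn_Ioo_of_le zero_le_one] at hc
  have key : Set.EqOn ((Set.Ioo (0 : ℝ) 1).indicator (fun x : ℝ =>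
      (x : ℂ) ^ ((m : ℂ) / 2 - 1) * (1 - (x : ℂ)) ^ (s + 1 - 1)))
      (fun t : ℝ => (t : ℂ) ^ ((m : ℂ) / 2 - 1) * gs s (1 - t)) (Set.Ioi 0) := by
    intro t ht
    have ht' : (0 : ℝ) < t := ht
    by_cases h : t < 1
    · have h' : 0 < 1 - t := by linarith
      simp [Set.indicator, gs, ht', h]
    · simp [Set.indicator, gs, h]
  constructor
  · rw [← integrableOn_congr_fun key measurableSet_Ioi]
    exact ((integrable_indicator_iff measurableSet_Ioo).2 hc).integrableOn
  · rw [← setIntegral_congr_fun measurableSet_Ioi key, setIntegral_indicator measurableSet_Ioo,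
      Complex.betaIntegral, intervalIntegral.integral_of_le zero_le_one]
    have : Set.Ioi (0 : ℝ) ∩ Set.Ioo 0 1 = Set.Ioo 0 1 := by
      ext x; simp
    rw [this, integral_Ioc_eq_integral_Ioo]

lemma gs_radial (m : ℕ) (hm : 1 ≤ m) (s : ℂ) (x : ℝ) (hx : 0 < x) :
    x ^ ((2 : ℝ) - 1) • (((x ^ (2 : ℝ) : ℝ) : ℂ) ^ ((m : ℂ) / 2 - 1) * gs s (1 - x ^ (2 : ℝ)))
     = x ^ (m - 1) • gs s (1 - x ^ 2) := by
  have hxc : (x : ℂ) ≠ 0 := by exact_mod_cast hx.ne'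
  have h1 : ((x ^ (2 : ℝ) : ℝ) : ℂ) ^ ((m : ℂ) / 2 - 1) = (x : ℂ) ^ ((m : ℂ) - 2) := by
    rw [Complex.ofReal_cpow hx.le, Complex.ofReal_ofNat, ← Complex.cpow_mul]
    · congr 1; ring
    · rw [← Complex.ofReal_log hx.le]
      have : ((Real.log x : ℂ) * 2).im = 0 := by simp
      rw [this]; linarith [Real.pi_pos]
    · rw [← Complex.ofReal_log hx.le]
      have : ((Real.log x : ℂ) * 2).im = 0 := by simp
      rw [this]; exact Real.pi_pos.le
  have h2 : (x : ℂ) * (x : ℂ) ^ ((m : ℂ) - 2) = (x : ℂ) ^ (m - 1) := by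
    rw [← Complex.cpow_natCast]
    nth_rewrite 1 [← Complex.cpow_one (x : ℂ)]
    rw [← Complex.cpow_add _ _ hxc]
    congr 1
    push_cast [hm]; ring
  rw [h1, Complex.real_smul, Complex.real_smul, ← mul_assoc, Real.rpow_two]
  congr 1
  rw [show (2 : ℝ) - 1 = 1 by norm_num, Real.rpow_one, h2]
  push_cast; rfl

lemma gs_integral_eucl (m : ℕ) (hm : 1 ≤ m) (s : ℂ) (hs : -1 < s.re) :
    Integrable (fun Y : EuclideanSpace ℝ (Fin m) => gs s (1 - ‖Y‖ ^ 2)) ∧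
    ∫ Y : EuclideanSpace ℝ (Fin m), gs s (1 - ‖Y‖ ^ 2) =
      (Real.pi : ℂ) ^ ((m : ℂ) / 2) * Complex.Gamma (s + 1)
        / Complex.Gamma (s + 1 + (m : ℂ) / 2) := by
  have : Nonempty (Fin m) := ⟨⟨0, hm⟩⟩
  obtain ⟨hI, hE⟩ := gs_beta_integrable m hm s hs
  have key : Set.EqOn (fun x : ℝ => x ^ ((2 : ℝ) - 1) •
      (((x ^ (2 : ℝ) : ℝ) : ℂ) ^ ((m : ℂ) / 2 - 1) * gs s (1 - x ^ (2 : ℝ))))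
      (fun x : ℝ => x ^ (m - 1) • gs s (1 - x ^ 2)) (Set.Ioi 0) := by
    intro x hx
    exact gs_radial m hm s x hx
  have hdim : Module.finrank ℝ (EuclideanSpace ℝ (Fin m)) = m := by simp
  constructor
  · rw [integrable_fun_norm_addHaar volume (f := fun r => gs s (1 - r ^ 2)), hdim,
      ← integrableOn_congr_fun key measurableSet_Ioi]
    exact (integrableOn_Ioi_comp_rpow_iff' (fun t : ℝ => (t : ℂ) ^ ((m : ℂ) / 2 - 1) * gs s (1 - t))
      two_ne_zero).2 hI
  · rw [integral_fun_norm_addHaar volume (f := fun r => gs s (1 - r ^ 2)), hdim,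
      ← setIntegral_congr_fun measurableSet_Ioi key]
    have h2 := integral_comp_rpow_Ioi_of_pos
      (g := fun t : ℝ => (t : ℂ) ^ ((m : ℂ) / 2 - 1) * gs s (1 - t)) (p := 2) two_pos
    rw [hE] at h2
    simp only [mul_smul] at h2
    rw [integral_smul] at h2
    have hu : 0 < ((m : ℂ) / 2).re := by
      have : ((m : ℂ) / 2).re = (m : ℝ) / 2 := by
        rw [show ((m : ℂ) / 2) = (((m : ℝ) / 2 : ℝ) : ℂ) by push_cast; rfl, Complex.ofReal_re]
      rw [this]
      have : (1 : ℝ) ≤ m := by exact_mod_cast hm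
      linarith
    have hv : 0 < (s + 1).re := by simp; linarith
    have hB := Complex.Gamma_mul_Gamma_eq_betaIntegral hu hv
    have hne : Complex.Gamma ((m : ℂ) / 2 + (s + 1)) ≠ 0 :=
      Complex.Gamma_ne_zero_of_re_pos (by rw [Complex.add_re]; linarith)
    have hne' : Complex.Gamma ((m : ℂ) / 2) ≠ 0 := Complex.Gamma_ne_zero_of_re_pos hu
    have hvol : (volume.real (Metric.ball (0 : EuclideanSpace ℝ (Fin m)) 1) : ℂ)
        = (Real.pi : ℂ) ^ ((m : ℂ) / 2) / (m / 2 * Complex.Gamma (m / 2)) := by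
      have hm0 : (m : ℂ) / 2 ≠ 0 := by
        intro h; rw [h] at hu; simp at hu
      rw [Measure.real, EuclideanSpace.volume_ball, ← Complex.Gamma_add_one _ hm0]
      simp only [ENNReal.ofReal_one, one_pow, one_mul, Fintype.card_fin]
      rw [ENNReal.toReal_ofReal]
      · push_cast
        rw [← Complex.Gamma_ofReal]
        push_cast
        congr 1
        rw [Real.sqrt_eq_rpow, Complex.ofReal_cpow Real.pi_pos.le, ← Complex.cpow_nat_mul]
        congr 1
        push_cast; ring
      · have := Real.Gamma_pos_of_pos (s := (m : ℝ) / 2 + 1) (by positivity)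
        positivity
    set J := ∫ x in Set.Ioi (0 : ℝ), x ^ ((2 : ℝ) - 1) •
      (((x ^ (2 : ℝ) : ℝ) : ℂ) ^ ((m : ℂ) / 2 - 1) * gs s (1 - x ^ (2 : ℝ))) with hJ
    rw [← h2, Complex.real_smul] at hB
    rw [nsmul_eq_mul, Complex.real_smul, hvol, show s + 1 + (m : ℂ) / 2 = (m : ℂ) / 2 + (s + 1) by ring]
    have hm1 : (m : ℂ) ≠ 0 := by
      have : m ≠ 0 := by omega
      exact_mod_cast this
    push_cast at hB
    have : Complex.Gamma (s + 1) = Complex.Gamma ((m : ℂ) / 2 + (s + 1)) * (2 * J) / Complex.Gamma (m / 2) := by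
      rw [eq_div_iff hne', ← hB]; ring
    rw [this]
    generalize Complex.Gamma ((m : ℂ) / 2 + (s + 1)) = A at hne ⊢
    field_simp

lemma gs_integral_pi (m : ℕ) (hm : 1 ≤ m) (s : ℂ) (hs : -1 < s.re) :
    Integrable (fun Y : Fin m → ℝ => gs s (1 - ∑ j, (Y j) ^ 2)) ∧
    ∫ Y : Fin m → ℝ, gs s (1 - ∑ j, (Y j) ^ 2) =
      (Real.pi : ℂ) ^ ((m : ℂ) / 2) * Complex.Gamma (s + 1)
        / Complex.Gamma (s + 1 + (m : ℂ) / 2) := by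
  obtain ⟨h1, h2⟩ := gs_integral_eucl m hm s hs
  have hmp := PiLp.volume_preserving_toLp (Fin m)
  have hemb : MeasurableEmbedding (WithLp.toLp 2 : (Fin m → ℝ) → EuclideanSpace ℝ (Fin m)) :=
    (MeasurableEquiv.toLp 2 (Fin m → ℝ)).measurableEmbedding
  have hc : ((fun Y : EuclideanSpace ℝ (Fin m) => gs s (1 - ‖Y‖ ^ 2)) ∘ WithLp.toLp 2) =
      (fun Y : Fin m → ℝ => gs s (1 - ∑ j, (Y j) ^ 2)) := by
    funext Y
    simp [EuclideanSpace.real_norm_sq_eq]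
  rw [← hmp.integrable_comp_emb hemb, hc] at h1
  rw [← hmp.integral_comp hemb] at h2
  refine ⟨h1, ?_⟩
  rw [← h2, ← hc]
  rfl

lemma sphere_null (m : ℕ) : ∀ᵐ Y : Fin m → ℝ, ∑ j, (Y j) ^ 2 ≠ 1 := by
  have hmp := PiLp.volume_preserving_toLp (Fin m)
  have h : ∀ᵐ Z : EuclideanSpace ℝ (Fin m), ‖Z‖ ^ 2 ≠ 1 := by
    rw [ae_iff]
    have : {a : EuclideanSpace ℝ (Fin m) | ¬ ‖a‖ ^ 2 ≠ 1} = Metric.sphere 0 1 := by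
      ext a
      have : ‖a‖ ≠ -1 := by linarith [norm_nonneg a]
      simp [this]
    rw [this]
    exact Measure.addHaar_sphere_of_ne_zero _ _ one_ne_zero
  filter_upwards [hmp.quasiMeasurePreserving.ae h] with Y hY
  simpa [EuclideanSpace.real_norm_sq_eq] using hY

lemma v_eq (m : ℕ) (s : ℂ) (ψ : (Fin m → ℝ) → ℂ) :
    ∫ Y in {Y : Fin m → ℝ | ∑ j, (Y j) ^ 2 ≤ 1},
      (((1 - ∑ j, (Y j) ^ 2 : ℝ)) : ℂ) ^ s * ψ Y =
    ∫ Y : Fin m → ℝ, gs s (1 - ∑ j, (Y j) ^ 2) * ψ Y := by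
  have hmeas : MeasurableSet {Y : Fin m → ℝ | ∑ j, (Y j) ^ 2 ≤ 1} :=
    measurableSet_le (by fun_prop) measurable_const
  rw [← integral_indicator hmeas]
  apply integral_congr_ae
  filter_upwards [sphere_null m] with Y hY
  by_cases h : ∑ j, (Y j) ^ 2 < 1
  · have h' : 0 < 1 - ∑ j, (Y j) ^ 2 := by linarith
    simp [Set.indicator, gs, h, h.le]
  · have h' : ¬ ∑ j, (Y j) ^ 2 ≤ 1 := fun hle => hY (le_antisymm hle (not_lt.1 h))
    simp [Set.indicator, gs, h, h']

lemma v_smooth (m : ℕ) (f : (Fin m → ℝ) → ℂ) (hf : Integrable f)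
    (hf0 : ∀ Y : Fin m → ℝ, 1 < ∑ j, (Y j) ^ 2 → f Y = 0)
    (φ : (Fin m → ℝ) → ℂ) (hφ : ContDiff ℝ (⊤ : ℕ∞) φ) :
    ContDiff ℝ (⊤ : ℕ∞) (fun p : ℝ × (Fin m → ℝ) => ∫ Y, f Y * φ (p.2 - p.1 • Y)) := by
  let χ : ContDiffBump (0 : Fin m → ℝ) := ⟨1, 2, one_pos, one_lt_two⟩
  have hχ : ContDiff ℝ (⊤ : ℕ∞) χ := χ.contDiff
  have hmain := contDiffOn_convolution_right_with_param_comp (μ := (volume : Measure (Fin m → ℝ)))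
    (ContinuousLinearMap.mul ℝ ℂ) (n := (⊤ : ℕ∞))
    (s := (Set.univ : Set (ℝ × (Fin m → ℝ)))) (v := fun _ => (0 : Fin m → ℝ))
    contDiffOn_const (f := f)
    (g := fun p z => (χ z : ℂ) * φ (p.2 + p.1 • z)) (k := tsupport χ) isOpen_univ
    χ.hasCompactSupport
    (by
      intro p x _ hx
      simp [image_eq_zero_of_notMem_tsupport hx])
    hf.locallyIntegrable
    (by
      apply ContDiff.contDiffOn
      apply ContDiff.mul
      · exact Complex.ofRealCLM.contDiff.comp (hχ.comp contDiff_snd)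
      · apply hφ.comp
        fun_prop)
  rw [contDiffOn_univ] at hmain
  convert hmain using 1
  funext p
  rw [convolution_def]
  apply integral_congr_ae
  filter_upwards with Y
  by_cases h : 1 < ∑ j, (Y j) ^ 2
  · simp [hf0 Y h]
  · have h1 : χ (0 - Y) = 1 := by
      apply χ.one_of_mem_closedBall
      rw [mem_closedBall_zero_iff, zero_sub, norm_neg, pi_norm_le_iff_of_nonneg one_pos.le]
      intro j
      have := Finset.single_le_sum (f := fun j => (Y j) ^ 2) (fun i _ => sq_nonneg (Y i))
        (Finset.mem_univ j)
      rw [Real.norm_eq_abs, abs_le_one_iff_mul_self_le_one]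
      nlinarith
    simp only [h1, ContinuousLinearMap.mul_apply', Complex.ofReal_one, one_mul]
    simp [sub_eq_add_neg]

lemma main_aux (m : ℕ) (hm : 1 ≤ m) (s : ℂ) (hs : -1 < s.re)
    (φ : (Fin (m) → ℝ) → ℂ) (hφ : ContDiff ℝ (⊤ : ℕ∞) φ)
    (hφc : HasCompactSupport φ)
    (v : ℝ × (Fin (m) → ℝ) → ℂ)
    (hv : v = fun p => ∫ Y in {Y : Fin (m) → ℝ | ∑ j, (Y j) ^ 2 ≤ 1},
      (((1 - ∑ j, (Y j) ^ 2 : ℝ)) : ℂ) ^ s * φ (p.2 - p.1 • Y)) :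
    ContDiff ℝ (⊤ : ℕ∞) v ∧
    (∀ x : ℝ, 0 < x → ∀ y : Fin (m) → ℝ,
      v (x, y) = ((x ^ (-(((m + 1 : ℕ) : ℝ) - 1)) : ℝ) : ℂ) *
        ∫ y' : Fin (m) → ℝ,
          (if 0 < 1 - (∑ j, (y j - y' j) ^ 2) / x ^ 2 then
              (((1 - (∑ j, (y j - y' j) ^ 2) / x ^ 2 : ℝ)) : ℂ) ^ s
            else 0) * φ y') ∧
    (∀ y : Fin (m) → ℝ,
      v (0, y) = (Real.pi : ℂ) ^ ((((m + 1 : ℕ) : ℂ) - 1) / 2) * Complex.Gamma (s + 1)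
          / Complex.Gamma (s + (((m + 1 : ℕ) : ℂ) + 1) / 2) * φ y) := by
  obtain ⟨hI, hE⟩ := gs_integral_pi m hm s hs
  have hv' : v = fun p => ∫ Y : Fin m → ℝ, gs s (1 - ∑ j, (Y j) ^ 2) * φ (p.2 - p.1 • Y) := by
    rw [hv]
    funext p
    exact v_eq m s (fun Y => φ (p.2 - p.1 • Y))
  clear hv
  subst hv'
  refine ⟨?_, ?_, ?_⟩
  · apply v_smooth m _ hI _ φ hφ
    intro Y hY
    have : ¬ (0 < 1 - ∑ j, (Y j) ^ 2) := by linarith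
    simp only [gs, this, if_false]
  · intro x hx y
    have h1 : ∀ y' : Fin m → ℝ, (if 0 < 1 - (∑ j, (y j - y' j) ^ 2) / x ^ 2 then
              (((1 - (∑ j, (y j - y' j) ^ 2) / x ^ 2 : ℝ)) : ℂ) ^ s
            else 0) * φ y' = gs s (1 - (∑ j, (y j - y' j) ^ 2) / x ^ 2) * φ y' :=
      fun y' => rfl
    simp only [h1]
    rw [← integral_sub_left_eq_self (fun y' : Fin m → ℝ =>
      gs s (1 - (∑ j, (y j - y' j) ^ 2) / x ^ 2) * φ y') volume y]
    have h2 := Measure.integral_comp_smul volume (fun Z : Fin m → ℝ =>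
      gs s (1 - (∑ j, (y j - (y - Z) j) ^ 2) / x ^ 2) * φ (y - Z)) x
    have h3 : ((x ^ (-(((m + 1 : ℕ) : ℝ) - 1)) : ℝ)) = |(x ^ Module.finrank ℝ (Fin m → ℝ))⁻¹| := by
      rw [abs_of_pos (by positivity), Module.finrank_fin_fun, Real.rpow_neg hx.le]
      push_cast
      rw [add_sub_cancel_right, Real.rpow_natCast]
    rw [h3, ← Complex.real_smul, ← h2]
    congr 1
    funext Y
    congr 3
    simp only [Pi.sub_apply, sub_sub_cancel, Pi.smul_apply, smul_eq_mul, mul_pow]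
    rw [← Finset.mul_sum, mul_div_cancel_left₀ _ (by positivity)]
  · intro y
    simp only [zero_smul, sub_zero]
    rw [integral_mul_const, hE]
    push_cast
    rw [add_sub_cancel_right, show s + ((m : ℂ) + 1 + 1) / 2 = s + 1 + (m : ℂ) / 2 by ring]

/-- for `n ≥ 2`, `Re s > −1` and `φ : ℝ^{n−1} → ℂ` smooth with compact
support, the function `v(x,y) = ∫_{|Y|≤1} (1−|Y|²)^s φ(y − xY) dY` is (i) smooth on
`ℝ × ℝ^{n−1}`; (ii) for `x > 0` it equals
`x^{−(n−1)} ∫ g_s(1 − |y−y′|²/x²) φ(y′) dy′` with `g_s(t) = t^s` for `t > 0`, `0` else;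
and (iii) `v(0,y) = (π^{(n−1)/2} Γ(s+1)/Γ(s+(n+1)/2)) φ(y)`. -/
theorem stmt10 (n : ℕ) (hn : 2 ≤ n) (s : ℂ) (hs : -1 < s.re)
    (φ : (Fin (n - 1) → ℝ) → ℂ) (hφ : ContDiff ℝ (⊤ : ℕ∞) φ)
    (hφc : HasCompactSupport φ)
    (v : ℝ × (Fin (n - 1) → ℝ) → ℂ)
    (hv : v = fun p => ∫ Y in {Y : Fin (n - 1) → ℝ | ∑ j, (Y j) ^ 2 ≤ 1},
      (((1 - ∑ j, (Y j) ^ 2 : ℝ)) : ℂ) ^ s * φ (p.2 - p.1 • Y)) :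
    ContDiff ℝ (⊤ : ℕ∞) v ∧
    (∀ x : ℝ, 0 < x → ∀ y : Fin (n - 1) → ℝ,
      v (x, y) = ((x ^ (-((n : ℝ) - 1)) : ℝ) : ℂ) *
        ∫ y' : Fin (n - 1) → ℝ,
          (if 0 < 1 - (∑ j, (y j - y' j) ^ 2) / x ^ 2 then
              (((1 - (∑ j, (y j - y' j) ^ 2) / x ^ 2 : ℝ)) : ℂ) ^ s
            else 0) * φ y') ∧
    (∀ y : Fin (n - 1) → ℝ,
      v (0, y) = (Real.pi : ℂ) ^ (((n : ℂ) - 1) / 2) * Complex.Gamma (s + 1)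
          / Complex.Gamma (s + ((n : ℂ) + 1) / 2) * φ y) := by
  obtain ⟨m, rfl⟩ : ∃ m, n = m + 1 := ⟨n - 1, by omega⟩
  exact main_aux m (by omega) s hs φ hφ hφc v hv
end

section
/- Let n ≥ 2 be an integer and λ, σ ∈ ℂ, and let B = {Y ∈ ℝ^{n−1} : |Y| < 1}. Assume that σ+2 is injective for P in the following sense: for every smooth w : ℝ^{n−1} → ℂ, if P_{σ+2}((1−|Y|²)^{σ+2} w) = 0 at every point of B, then w vanishes on B. Then for every smooth v : ℝ^{n−1} → ℂ such that P_σ((1−|Y|²)^σ v) = 0 at every point of B, either v vanishes on B, or ŝ₊(λ) − σ is a nonnegative integer, or ŝ₋(λ) − σ is a nonnegative integer. -/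
/-- `∂ⱼ` on functions on `ℝ^m`. -/
noncomputable def pd {m : ℕ} (j : Fin m) (u : (Fin m → ℝ) → ℂ) (Y : Fin m → ℝ) : ℂ :=
  fderiv ℝ u Y (Pi.single j 1)

/-- The Euler vector field `E u (Y) = Σⱼ Yⱼ ∂ⱼ u (Y)`. -/
noncomputable def euler {m : ℕ} (u : (Fin m → ℝ) → ℂ) (Y : Fin m → ℝ) : ℂ :=
  ∑ j, (Y j : ℂ) * pd j u Y

/-- The Euclidean Laplacian `Δ u = Σⱼ ∂ⱼ² u`. -/
noncomputable def lap {m : ℕ} (u : (Fin m → ℝ) → ℂ) (Y : Fin m → ℝ) : ℂ :=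
  ∑ j, pd j (pd j u) Y

/-- The normal operator family `P_σ u = −(E + (n−1−σ))((E − σ)u) + Δ_Y u − λ u`
acting on functions on `ℝ^{n−1}` (the real form of
`(YD_Y − i(n−1−σ))(YD_Y + iσ) − Δ_Y − λ`). -/
noncomputable def Pop (n : ℕ) (lam σ : ℂ) (u : (Fin (n - 1) → ℝ) → ℂ)
    (Y : Fin (n - 1) → ℝ) : ℂ :=
  -(euler (fun Z => euler u Z - σ * u Z) Y
      + ((n : ℂ) - 1 - σ) * (euler u Y - σ * u Y))
    + lap u Y - lam * u Y

section Helpers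
variable {m : ℕ}

theorem pd_congr {j : Fin m} {u v : (Fin m → ℝ) → ℂ} {Y : Fin m → ℝ}
    (h : u =ᶠ[nhds Y] v) : pd j u Y = pd j v Y := by
  unfold pd; rw [h.fderiv_eq]

theorem euler_congr {u v : (Fin m → ℝ) → ℂ} {Y : Fin m → ℝ}
    (h : u =ᶠ[nhds Y] v) : euler u Y = euler v Y := by
  unfold euler; simp only [pd_congr h]

theorem pd_add {j : Fin m} {u v : (Fin m → ℝ) → ℂ} {Y : Fin m → ℝ}
    (hu : DifferentiableAt ℝ u Y) (hv : DifferentiableAt ℝ v Y) :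
    pd j (fun Z => u Z + v Z) Y = pd j u Y + pd j v Y := by
  unfold pd; rw [fderiv_fun_add hu hv]; rfl

theorem pd_mul {j : Fin m} {u v : (Fin m → ℝ) → ℂ} {Y : Fin m → ℝ}
    (hu : DifferentiableAt ℝ u Y) (hv : DifferentiableAt ℝ v Y) :
    pd j (fun Z => u Z * v Z) Y = u Y * pd j v Y + pd j u Y * v Y := by
  unfold pd; rw [fderiv_fun_mul hu hv]; simp [mul_comm]

theorem pd_cmul {j : Fin m} {v : (Fin m → ℝ) → ℂ} {Y : Fin m → ℝ} (c : ℂ)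
    (hv : DifferentiableAt ℝ v Y) :
    pd j (fun Z => c * v Z) Y = c * pd j v Y := by
  rw [pd_mul (differentiableAt_const c) hv]; simp [pd]

theorem pd_sum {ι : Type*} (s : Finset ι) {j : Fin m} {u : ι → (Fin m → ℝ) → ℂ} {Y : Fin m → ℝ}
    (hu : ∀ i, DifferentiableAt ℝ (u i) Y) :
    pd j (fun Z => ∑ i ∈ s, u i Z) Y = ∑ i ∈ s, pd j (u i) Y := by
  unfold pd; rw [fderiv_fun_sum (fun i _ => hu i)]; simp

theorem diff_coord (i : Fin m) : ContDiff ℝ (⊤ : ℕ∞) (fun Z : Fin m → ℝ => (Z i : ℂ)) :=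
  Complex.ofRealCLM.contDiff.comp (contDiff_apply ℝ ℝ i)

theorem pd_coord (i j : Fin m) (Y : Fin m → ℝ) :
    pd j (fun Z : Fin m → ℝ => (Z i : ℂ)) Y = if i = j then 1 else 0 := by
  have h : HasFDerivAt (fun Z : Fin m → ℝ => (Z i : ℂ))
      (Complex.ofRealCLM.comp (ContinuousLinearMap.proj (R := ℝ) (φ := fun _ : Fin m => ℝ) i)) Y :=
    (Complex.ofRealCLM.comp
      (ContinuousLinearMap.proj (R := ℝ) (φ := fun _ : Fin m => ℝ) i)).hasFDerivAt
  unfold pd; rw [h.fderiv]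
  by_cases hij : i = j
  · subst hij; simp
  · simp [hij]

theorem smooth_pd {v : (Fin m → ℝ) → ℂ} (hv : ContDiff ℝ (⊤ : ℕ∞) v) (j : Fin m) :
    ContDiff ℝ (⊤ : ℕ∞) (pd j v) :=
  (hv.fderiv_right (m := (⊤ : ℕ∞)) (by simp)).clm_apply contDiff_const

theorem smooth_euler {v : (Fin m → ℝ) → ℂ} (hv : ContDiff ℝ (⊤ : ℕ∞) v) :
    ContDiff ℝ (⊤ : ℕ∞) (euler v) :=
  ContDiff.sum fun j _ => (diff_coord j).mul (smooth_pd hv j)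

theorem smooth_lap {v : (Fin m → ℝ) → ℂ} (hv : ContDiff ℝ (⊤ : ℕ∞) v) :
    ContDiff ℝ (⊤ : ℕ∞) (lap v) :=
  ContDiff.sum fun j _ => smooth_pd (smooth_pd hv j) j

theorem sd {v : (Fin m → ℝ) → ℂ} (hv : ContDiff ℝ (⊤ : ℕ∞) v) {Y : Fin m → ℝ} :
    DifferentiableAt ℝ v Y := hv.differentiable (by simp) Y

theorem pd_comm {v : (Fin m → ℝ) → ℂ} (hv : ContDiff ℝ (⊤ : ℕ∞) v) (i j : Fin m)
    (Y : Fin m → ℝ) : pd i (pd j v) Y = pd j (pd i v) Y := by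
  have hd : DifferentiableAt ℝ (fderiv ℝ v) Y :=
    (hv.fderiv_right (m := (⊤ : ℕ∞)) (by simp)).differentiable (by simp) Y
  have key : ∀ a b : Fin m, pd a (pd b v) Y
      = fderiv ℝ (fderiv ℝ v) Y (Pi.single a 1) (Pi.single b 1) := by
    intro a b
    have : pd b v = fun Z => fderiv ℝ v Z (Pi.single b 1) := rfl
    rw [this]; unfold pd
    rw [fderiv_clm_apply hd (differentiableAt_const _)]; simp
  rw [key, key]
  have hs : IsSymmSndFDerivAt ℝ v Y :=
    (hv.contDiffAt).isSymmSndFDerivAt (by simpa using (WithTop.coe_le_coe.2 (le_top : (2 : ℕ∞) ≤ ⊤)))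
  exact hs _ _

theorem pd_euler {v : (Fin m → ℝ) → ℂ} (hv : ContDiff ℝ (⊤ : ℕ∞) v) (j : Fin m)
    (Y : Fin m → ℝ) : pd j (euler v) Y = euler (pd j v) Y + pd j v Y := by
  have : euler v = fun Z => ∑ i, (Z i : ℂ) * pd i v Z := rfl
  rw [this, pd_sum _ (fun i => sd ((diff_coord i).mul (smooth_pd hv i)))]
  simp only [pd_mul (sd (diff_coord _)) (sd (smooth_pd hv _)), pd_coord]
  rw [Finset.sum_add_distrib]
  simp [euler, pd_comm hv j]

theorem pd_lap {v : (Fin m → ℝ) → ℂ} (hv : ContDiff ℝ (⊤ : ℕ∞) v) (j : Fin m)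
    (Y : Fin m → ℝ) : pd j (lap v) Y = lap (pd j v) Y := by
  have : lap v = fun Z => ∑ i, pd i (pd i v) Z := rfl
  rw [this, pd_sum _ (fun i => sd (smooth_pd (smooth_pd hv i) i))]
  unfold lap
  refine Finset.sum_congr rfl fun i _ => ?_
  rw [pd_comm (smooth_pd hv i) j i]
  congr 1
  ext Z; exact pd_comm hv j i Z

theorem euler_add {u v : (Fin m → ℝ) → ℂ} {Y : Fin m → ℝ}
    (hu : DifferentiableAt ℝ u Y) (hv : DifferentiableAt ℝ v Y) :
    euler (fun Z => u Z + v Z) Y = euler u Y + euler v Y := by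
  simp only [euler, pd_add hu hv, mul_add, Finset.sum_add_distrib]

theorem euler_mul {u v : (Fin m → ℝ) → ℂ} {Y : Fin m → ℝ}
    (hu : DifferentiableAt ℝ u Y) (hv : DifferentiableAt ℝ v Y) :
    euler (fun Z => u Z * v Z) Y = u Y * euler v Y + euler u Y * v Y := by
  simp only [euler, pd_mul hu hv, mul_add, Finset.sum_add_distrib, Finset.mul_sum, Finset.sum_mul]
  congr 1 <;> refine Finset.sum_congr rfl fun i _ => by ring

theorem euler_cmul {v : (Fin m → ℝ) → ℂ} {Y : Fin m → ℝ} (c : ℂ)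
    (hv : DifferentiableAt ℝ v Y) :
    euler (fun Z => c * v Z) Y = c * euler v Y := by
  rw [euler_mul (differentiableAt_const c) hv]; simp [euler, pd]

/-- `P` expanded. -/
theorem Pop_eq (n : ℕ) (lam σ : ℂ) {u : (Fin (n - 1) → ℝ) → ℂ} {Y : Fin (n - 1) → ℝ}
    (hu : DifferentiableAt ℝ u Y) (hE : DifferentiableAt ℝ (euler u) Y) :
    Pop n lam σ u Y = -(euler (euler u) Y - σ * euler u Y
      + ((n : ℂ) - 1 - σ) * (euler u Y - σ * u Y)) + lap u Y - lam * u Y := by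
  unfold Pop
  have : (fun Z => euler u Z - σ * u Z) = fun Z => euler u Z + (-σ) * u Z := by
    ext Z; ring
  rw [this, euler_add hE (hu.const_mul _), euler_cmul _ hu]
  ring

theorem Pop_smooth {n : ℕ} (lam σ : ℂ) {u : (Fin (n - 1) → ℝ) → ℂ}
    (hu : ContDiff ℝ (⊤ : ℕ∞) u) :
    Pop n lam σ u = fun Y => (-1) * euler (euler u) Y + ((2 * σ - ((n : ℂ) - 1)) * euler u Y
      + (((((n : ℂ) - 1 - σ) * σ) - lam) * u Y + lap u Y)) := by
  ext Y
  rw [Pop_eq n lam σ (sd hu) (sd (smooth_euler hu))]; ring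

theorem Pop_pd {n : ℕ} (lam σ : ℂ) {u : (Fin (n - 1) → ℝ) → ℂ}
    (hu : ContDiff ℝ (⊤ : ℕ∞) u) (j : Fin (n - 1)) (Y : Fin (n - 1) → ℝ) :
    Pop n lam (σ - 1) (pd j u) Y = pd j (Pop n lam σ u) Y := by
  have hE := smooth_euler hu
  have hEE := smooth_euler hE
  have hL := smooth_lap hu
  rw [Pop_smooth lam σ hu, Pop_smooth lam (σ - 1) (smooth_pd hu j)]
  rw [pd_add (sd (contDiff_const.mul hEE)) (sd ((contDiff_const.mul hE).add
      ((contDiff_const.mul hu).add hL))),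
    pd_add (sd (contDiff_const.mul hE)) (sd ((contDiff_const.mul hu).add hL)),
    pd_add (sd (contDiff_const.mul hu)) (sd hL),
    pd_cmul _ (sd hEE), pd_cmul _ (sd hE), pd_cmul _ (sd hu), pd_lap hu, pd_euler hE, pd_euler hu]
  have : euler (pd j (euler u)) Y = euler (euler (pd j u)) Y + euler (pd j u) Y := by
    have h2 : pd j (euler u) = fun Z => euler (pd j u) Z + pd j u Z := by
      ext Z; exact pd_euler hu j Z
    rw [h2, euler_add (sd (smooth_euler (smooth_pd hu j))) (sd (smooth_pd hu j))]
  rw [this]; ring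

/-- the open unit ball -/
def BB (m : ℕ) : Set (Fin m → ℝ) := {Y | ∑ j, (Y j) ^ 2 < 1}

theorem BB_open : IsOpen (BB m) :=
  isOpen_lt (by fun_prop) continuous_const

/-- complex powers of `1 - |Z|²` -/
noncomputable def GG (s : ℂ) (Z : Fin m → ℝ) : ℂ := (((1 - ∑ j, (Z j) ^ 2 : ℝ)) : ℂ) ^ s

/-- `|Z|²` -/
noncomputable def RR (Z : Fin m → ℝ) : ℂ := ∑ j, (Z j : ℂ) ^ 2

theorem GG_hasFDeriv (s : ℂ) {Y : Fin m → ℝ} (hY : Y ∈ BB m) :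
    ∃ L : (Fin m → ℝ) →L[ℝ] ℂ, HasFDerivAt (GG s) L Y ∧
      ∀ j, L (Pi.single j 1) = -2 * s * (Y j : ℂ) * GG (s - 1) Y := by
  have hf : HasFDerivAt (fun Z : Fin m → ℝ => (1 - ∑ j, (Z j) ^ 2 : ℝ))
      (-(∑ j, (2 * Y j) • ContinuousLinearMap.proj (R := ℝ) (φ := fun _ : Fin m => ℝ) j)) Y := by
    have := HasFDerivAt.fun_sum (u := Finset.univ) (fun j _ =>
      ((ContinuousLinearMap.proj (R := ℝ) (φ := fun _ : Fin m => ℝ) j).hasFDerivAt (x := Y)).pow 2)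
    simpa using this.const_sub 1
  have hpos : (0 : ℝ) < 1 - ∑ j, (Y j) ^ 2 := sub_pos.2 hY
  have hc : HasDerivAt (fun z : ℂ => z ^ s)
      (s * (((1 - ∑ j, (Y j) ^ 2 : ℝ)) : ℂ) ^ (s - 1)) (((1 - ∑ j, (Y j) ^ 2 : ℝ)) : ℂ) := by
    have := (hasDerivAt_id (((1 - ∑ j, (Y j) ^ 2 : ℝ)) : ℂ)).cpow_const (c := s)
      (Complex.ofReal_mem_slitPlane.2 hpos)
    simpa using this
  have hr := hc.comp_ofReal
  refine ⟨_, HasFDerivAt.comp (f := fun Z : Fin m → ℝ => (1 - ∑ j, (Z j) ^ 2 : ℝ)) Y hr.hasFDerivAt hf, fun j => ?_⟩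
  simp [GG, Finset.sum_apply, Pi.single_apply]
  ring

theorem GG_diff (s : ℂ) {Y : Fin m → ℝ} (hY : Y ∈ BB m) : DifferentiableAt ℝ (GG s) Y := by
  obtain ⟨L, hL, -⟩ := GG_hasFDeriv s hY
  exact hL.differentiableAt

theorem pd_GG (s : ℂ) {Y : Fin m → ℝ} (hY : Y ∈ BB m) (j : Fin m) :
    pd j (GG s) Y = -2 * s * (Y j : ℂ) * GG (s - 1) Y := by
  obtain ⟨L, hL, h⟩ := GG_hasFDeriv s hY
  unfold pd; rw [hL.fderiv, h]

theorem GG_step (s : ℂ) {Y : Fin m → ℝ} (hY : Y ∈ BB m) :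
    GG s Y = (1 - RR Y) * GG (s - 1) Y := by
  have hpos : (0 : ℝ) < 1 - ∑ j, (Y j) ^ 2 := sub_pos.2 hY
  have hne : (((1 - ∑ j, (Y j) ^ 2 : ℝ)) : ℂ) ≠ 0 := by exact_mod_cast hpos.ne'
  have h1 : (1 - RR Y) = (((1 - ∑ j, (Y j) ^ 2 : ℝ)) : ℂ) := by simp [RR]
  rw [h1]; unfold GG
  rw [Complex.cpow_sub _ _ hne, Complex.cpow_one]
  field_simp

theorem GG_ne (s : ℂ) {Y : Fin m → ℝ} (hY : Y ∈ BB m) : GG s Y ≠ 0 := by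
  have hpos : (0 : ℝ) < 1 - ∑ j, (Y j) ^ 2 := sub_pos.2 hY
  have hne : (((1 - ∑ j, (Y j) ^ 2 : ℝ)) : ℂ) ≠ 0 := by exact_mod_cast hpos.ne'
  unfold GG
  exact fun h => hne ((Complex.cpow_eq_zero_iff _ _).1 h).1

theorem euler_GG (s : ℂ) {Y : Fin m → ℝ} (hY : Y ∈ BB m) :
    euler (GG s) Y = -2 * s * RR Y * GG (s - 1) Y := by
  simp only [euler, pd_GG s hY, RR, Finset.mul_sum, Finset.sum_mul]
  exact Finset.sum_congr rfl fun i _ => by ring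

theorem smooth_RR : ContDiff ℝ (⊤ : ℕ∞) (RR (m := m)) :=
  ContDiff.sum fun j _ => (diff_coord j).pow 2

theorem euler_RR (Y : Fin m → ℝ) : euler (RR (m := m)) Y = 2 * RR Y := by
  have h : ∀ j, pd j (RR (m := m)) Y = 2 * (Y j : ℂ) := by
    intro j
    have : RR (m := m) = fun Z => ∑ i, (Z i : ℂ) * (Z i : ℂ) := by
      ext Z; simp [RR, sq]
    rw [this, pd_sum _ (fun i => sd ((diff_coord i).mul (diff_coord i)))]
    simp only [pd_mul (sd (diff_coord _)) (sd (diff_coord _)), pd_coord]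
    simp [Finset.sum_add_distrib]; ring
  simp only [euler, h, RR, Finset.mul_sum]
  exact Finset.sum_congr rfl fun i _ => by ring

theorem euler_GGv (s : ℂ) {v : (Fin m → ℝ) → ℂ} (hv : ContDiff ℝ (⊤ : ℕ∞) v)
    {Y : Fin m → ℝ} (hY : Y ∈ BB m) :
    euler (fun Z => GG s Z * v Z) Y = GG s Y * euler v Y
      + (-2 * s) * (GG (s - 1) Y * (RR Y * v Y)) := by
  rw [euler_mul (GG_diff s hY) (sd hv), euler_GG s hY]; ring

theorem pd_GGv (s : ℂ) {v : (Fin m → ℝ) → ℂ} (hv : ContDiff ℝ (⊤ : ℕ∞) v)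
    {Y : Fin m → ℝ} (hY : Y ∈ BB m) (j : Fin m) :
    pd j (fun Z => GG s Z * v Z) Y = GG s Y * pd j v Y
      + (-2 * s) * (GG (s - 1) Y * ((Y j : ℂ) * v Y)) := by
  rw [pd_mul (GG_diff s hY) (sd hv), pd_GG s hY]; ring

theorem pdpd_GGv (s : ℂ) {v : (Fin m → ℝ) → ℂ} (hv : ContDiff ℝ (⊤ : ℕ∞) v)
    {Y : Fin m → ℝ} (hY : Y ∈ BB m) (j : Fin m) :
    pd j (pd j (fun Z => GG s Z * v Z)) Y = GG s Y * pd j (pd j v) Y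
      - 4 * s * GG (s - 1) Y * ((Y j : ℂ) * pd j v Y) - 2 * s * GG (s - 1) Y * v Y
      + 4 * s * (s - 1) * GG (s - 1 - 1) Y * v Y * (Y j : ℂ) ^ 2 := by
  have hw : ContDiff ℝ (⊤ : ℕ∞) (fun Z : Fin m → ℝ => (Z j : ℂ) * v Z) := (diff_coord j).mul hv
  have h : pd j (fun Z => GG s Z * v Z) =ᶠ[nhds Y] fun Z => GG s Z * pd j v Z
      + (-2 * s) * (GG (s - 1) Z * ((Z j : ℂ) * v Z)) := by
    filter_upwards [BB_open.mem_nhds hY] with Z hZ using pd_GGv s hv hZ j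
  have h2 : DifferentiableAt ℝ (fun Z => GG (s - 1) Z * ((Z j : ℂ) * v Z)) Y :=
    (GG_diff _ hY).fun_mul (sd hw)
  rw [pd_congr h, pd_add ((GG_diff _ hY).fun_mul (sd (smooth_pd hv j))) (h2.const_mul _),
    pd_cmul _ h2, pd_GGv s (smooth_pd hv j) hY, pd_GGv (s - 1) hw hY,
    pd_mul (sd (diff_coord j)) (sd hv), pd_coord]
  simp only [if_true]; ring

theorem lap_GGv (s : ℂ) {v : (Fin m → ℝ) → ℂ} (hv : ContDiff ℝ (⊤ : ℕ∞) v)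
    {Y : Fin m → ℝ} (hY : Y ∈ BB m) :
    lap (fun Z => GG s Z * v Z) Y = GG s Y * lap v Y
      - 4 * s * GG (s - 1) Y * euler v Y - m * (2 * s * GG (s - 1) Y * v Y)
      + 4 * s * (s - 1) * GG (s - 1 - 1) Y * v Y * RR Y := by
  have : lap (fun Z => GG s Z * v Z) Y = ∑ j, pd j (pd j (fun Z => GG s Z * v Z)) Y := rfl
  rw [this]
  simp only [pdpd_GGv s hv hY, Finset.sum_add_distrib, Finset.sum_sub_distrib, ← Finset.mul_sum]
  simp [lap, euler, RR]
  ring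

theorem Pop_conj {n : ℕ} (hn : 2 ≤ n) (lam s : ℂ) {v : (Fin (n - 1) → ℝ) → ℂ}
    (hv : ContDiff ℝ (⊤ : ℕ∞) v) {Y : Fin (n - 1) → ℝ} (hY : Y ∈ BB (n - 1)) :
    Pop n lam s (fun Z => GG s Z * v Z) Y = GG s Y * Pop n lam (-s) v Y := by
  have hw : ContDiff ℝ (⊤ : ℕ∞) (fun Z : Fin (n - 1) → ℝ => RR Z * v Z) := smooth_RR.mul hv
  have h : euler (fun Z => GG s Z * v Z) =ᶠ[nhds Y] fun Z => GG s Z * euler v Z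
      + (-2 * s) * (GG (s - 1) Z * (RR Z * v Z)) := by
    filter_upwards [BB_open.mem_nhds hY] with Z hZ using euler_GGv s hv hZ
  have h1 : DifferentiableAt ℝ (fun Z => GG s Z * euler v Z) Y :=
    (GG_diff _ hY).fun_mul (sd (smooth_euler hv))
  have h2 : DifferentiableAt ℝ (fun Z => GG (s - 1) Z * (RR Z * v Z)) Y :=
    (GG_diff _ hY).fun_mul (sd hw)
  have hE : DifferentiableAt ℝ (euler (fun Z => GG s Z * v Z)) Y :=
    (h1.fun_add (h2.const_mul _)).congr_of_eventuallyEq h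
  rw [Pop_eq n lam s ((GG_diff _ hY).fun_mul (sd hv)) hE, Pop_smooth lam (-s) hv,
    euler_congr h, euler_add h1 (h2.const_mul _), euler_cmul _ h2,
    euler_GGv s (smooth_euler hv) hY, euler_GGv (s - 1) hw hY, euler_GGv s hv hY,
    lap_GGv s hv hY, euler_mul (sd smooth_RR) (sd hv), euler_RR]
  have hm : ((n - 1 : ℕ) : ℂ) = (n : ℂ) - 1 := by
    rw [Nat.cast_sub (by omega)]; simp
  rw [hm, GG_step s hY, GG_step (s - 1) hY]
  ring

theorem root_cases {M lam d s : ℂ} (hd : d ^ 2 = (M / 2) ^ 2 - lam) (h : (M + s) * s + lam = 0) :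
    -M / 2 + d = s ∨ -M / 2 - d = s := by
  have : (-M / 2 + d - s) * (-M / 2 - d - s) = 0 := by linear_combination h - hd
  rcases mul_eq_zero.1 this with h | h
  · exact Or.inl (sub_eq_zero.1 h)
  · exact Or.inr (sub_eq_zero.1 h)

theorem euler_zero {u : (Fin m → ℝ) → ℂ} (h : ∀ j, ∀ Y ∈ BB m, pd j u Y = 0) :
    ∀ Y ∈ BB m, euler u Y = 0 ∧ lap u Y = 0 := by
  intro Y hY
  constructor
  · simp [euler, h _ Y hY]
  · unfold lap
    refine Finset.sum_eq_zero fun j _ => ?_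
    have : pd j u =ᶠ[nhds Y] fun _ => 0 := by
      filter_upwards [BB_open.mem_nhds hY] with Z hZ using h j Z hZ
    rw [pd_congr this]; simp [pd]

/-- If `u` has vanishing first derivatives in the ball and solves the equation. -/
theorem const_case {n : ℕ} (lam s : ℂ) {u : (Fin (n - 1) → ℝ) → ℂ} (hu : ContDiff ℝ (⊤ : ℕ∞) u)
    (h : ∀ j, ∀ Y ∈ BB (n - 1), pd j u Y = 0) (hP : ∀ Y ∈ BB (n - 1), Pop n lam (-s) u Y = 0)
    (hne : ((n : ℂ) - 1 + s) * s + lam ≠ 0) : ∀ Y ∈ BB (n - 1), u Y = 0 := by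
  intro Y hY
  have h1 := hP Y hY
  obtain ⟨hE, hL⟩ := euler_zero h Y hY
  have hEE : euler (euler u) Y = 0 := by
    have : euler u =ᶠ[nhds Y] fun _ => 0 := by
      filter_upwards [BB_open.mem_nhds hY] with Z hZ using (euler_zero h Z hZ).1
    rw [euler_congr this]; simp [euler, pd]
  rw [Pop_smooth lam (-s) hu] at h1
  simp only [hE, hL, hEE] at h1
  have : (((n : ℂ) - 1 + s) * s + lam) * u Y = 0 := by linear_combination -h1
  exact (mul_eq_zero.1 this).resolve_left hne

theorem Pop_pd_zero {n : ℕ} (lam s : ℂ) {u : (Fin (n - 1) → ℝ) → ℂ} (hu : ContDiff ℝ (⊤ : ℕ∞) u)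
    (hP : ∀ Y ∈ BB (n - 1), Pop n lam s u Y = 0) (j : Fin (n - 1)) :
    ∀ Y ∈ BB (n - 1), Pop n lam (s - 1) (pd j u) Y = 0 := by
  intro Y hY
  have : Pop n lam s u =ᶠ[nhds Y] fun _ => 0 := by
    filter_upwards [BB_open.mem_nhds hY] with Z hZ using hP Z hZ
  rw [Pop_pd lam s hu, pd_congr this]; simp [pd]

end Helpers

/-- suppose that for every globally smooth `w : ℝ^{n−1} → ℂ`,
`P_{σ+2}((1−|Y|²)^{σ+2} w) = 0` on the open unit ball `B` forces `w = 0` on `B`.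
Then for every globally smooth `v : ℝ^{n−1} → ℂ` with `P_σ((1−|Y|²)^σ v) = 0` on `B`,
either `v` vanishes on `B`, or `ŝ₊(λ) − σ ∈ ℕ`, or `ŝ₋(λ) − σ ∈ ℕ`, where
`ŝ_±(λ) = −(n−1)/2 ± d`, `d² = ((n−1)/2)² − λ`. -/
theorem stmt19 (n : ℕ) (hn : 2 ≤ n) (lam σ d : ℂ)
    (hd : d ^ 2 = (((n : ℂ) - 1) / 2) ^ 2 - lam)
    (hinj : ∀ w : (Fin (n - 1) → ℝ) → ℂ, ContDiff ℝ (⊤ : ℕ∞) w →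
      (∀ Y ∈ {Y : Fin (n - 1) → ℝ | ∑ j, (Y j) ^ 2 < 1},
        Pop n lam (σ + 2)
          (fun Z => (((1 - ∑ j, (Z j) ^ 2 : ℝ)) : ℂ) ^ (σ + 2) * w Z) Y = 0) →
      ∀ Y ∈ {Y : Fin (n - 1) → ℝ | ∑ j, (Y j) ^ 2 < 1}, w Y = 0) :
    ∀ v : (Fin (n - 1) → ℝ) → ℂ, ContDiff ℝ (⊤ : ℕ∞) v →
      (∀ Y ∈ {Y : Fin (n - 1) → ℝ | ∑ j, (Y j) ^ 2 < 1},
        Pop n lam σ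
          (fun Z => (((1 - ∑ j, (Z j) ^ 2 : ℝ)) : ℂ) ^ σ * v Z) Y = 0) →
      (∀ Y ∈ {Y : Fin (n - 1) → ℝ | ∑ j, (Y j) ^ 2 < 1}, v Y = 0)
        ∨ (∃ k : ℕ, (-((n : ℂ) - 1) / 2 + d) - σ = (k : ℂ))
        ∨ (∃ k : ℕ, (-((n : ℂ) - 1) / 2 - d) - σ = (k : ℂ)) := by
  intro v hv hPv
  have hP0 : ∀ Y ∈ BB (n - 1), Pop n lam (-σ) v Y = 0 := by
    intro Y hY
    have h1 : Pop n lam σ (fun Z => GG σ Z * v Z) Y = 0 := hPv Y hY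
    rw [Pop_conj hn lam σ hv hY] at h1
    exact (mul_eq_zero.1 h1).resolve_left (GG_ne σ hY)
  have hP1 := fun j => Pop_pd_zero lam (-σ) hv hP0 j
  have hP2 := fun i j => Pop_pd_zero lam (-σ - 1) (smooth_pd hv j) (hP1 j) i
  have hz : ∀ i j, ∀ Y ∈ BB (n - 1), pd i (pd j v) Y = 0 := by
    intro i j
    refine hinj _ (smooth_pd (smooth_pd hv j) i) fun Y hY => ?_
    have h1 := Pop_conj hn lam (σ + 2) (smooth_pd (smooth_pd hv j) i) (Y := Y) hY
    refine h1.trans ?_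
    rw [show -(σ + 2) = -σ - 1 - 1 by ring, hP2 i j Y hY, mul_zero]
  by_cases hA : ((n : ℂ) - 1 + (σ + 1)) * (σ + 1) + lam = 0
  · right
    rcases root_cases hd hA with h | h
    · left; exact ⟨1, by rw [h]; push_cast; ring⟩
    · right; exact ⟨1, by rw [h]; push_cast; ring⟩
  by_cases hB : ((n : ℂ) - 1 + σ) * σ + lam = 0
  · right
    rcases root_cases hd hB with h | h
    · left; exact ⟨0, by rw [h]; simp⟩
    · right; exact ⟨0, by rw [h]; simp⟩
  left
  refine const_case lam σ hv (fun j => ?_) hP0 hB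
  refine const_case lam (σ + 1) (smooth_pd hv j) (fun i => hz i j) ?_ hA
  rw [show -(σ + 1) = -σ - 1 by ring]
  exact hP1 j
end
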